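/- arXiv:1906.05598 — 3 statements merged into one kernel-verified Lean document; each statement's English description precedes it below -/
import Mathlib

section
/- Let P be a set of 2n points in regular wheel configuration, n ≥ 2, and let T_1, ..., T_n be a partition of the edges of the complete geometric graph on P into plane spanning trees. Then there is a unique tree T among T_1, ..., T_n such that: (i) T has exactly one boundary edge and exactly n radial edges, which go to consecutive circle points; and (ii) every other tree T_i ≠ T has exactly two boundary edges and exactly one radial edge. -/
open scoped Real

namespace WheelCfg

/-- Vertex type of the wheel on `2n` points: `none` is the center,
`some i` is the `i`-th of the `2n-1` regularly spaced circle points. -/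
abbrev WV (n : ℕ) := Option (Fin (2*n-1))

/-- Positions of the points of a regular wheel configuration with center `c`,
radius `R` and initial angle `θ`. -/
noncomputable def wpos (n : ℕ) (c : ℝ × ℝ) (R θ : ℝ) : WV n → ℝ × ℝ
  | none => c
  | some i => (c.1 + R * Real.cos (θ + 2*π*i.val/(2*n-1)),
               c.2 + R * Real.sin (θ + 2*π*i.val/(2*n-1)))

/-- A radial edge: one endpoint is the center. -/
def Radial {n : ℕ} : WV n → WV n → Prop
  | none, _ => True
  | _, none => True
  | some _, some _ => False

/-- A boundary edge: joins two cyclically consecutive circle points. -/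
def Boundary {n : ℕ} : WV n → WV n → Prop
  | some i, some j => (i.val + 1) % (2*n-1) = j.val ∨ (j.val + 1) % (2*n-1) = i.val
  | _, _ => False

/-- Non-crossing: distinct edges have disjoint open segments. -/
def NonCrossing {n : ℕ} (pos : WV n → ℝ × ℝ) (T : SimpleGraph (WV n)) : Prop :=
  ∀ a b c d : WV n, T.Adj a b → T.Adj c d → s(a,b) ≠ s(c,d) →
    Disjoint (openSegment ℝ (pos a) (pos b)) (openSegment ℝ (pos c) (pos d))

/-- A plane spanning tree of the wheel configuration. -/
def PlaneSpanningTree {n : ℕ} (pos : WV n → ℝ × ℝ) (T : SimpleGraph (WV n)) : Prop :=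
  T.IsTree ∧ NonCrossing pos T

/-- A partition of the edge set of the complete geometric graph into `n` graphs. -/
def IsPartition {n : ℕ} (T : Fin n → SimpleGraph (WV n)) : Prop :=
  ∀ a b : WV n, a ≠ b → ∃! i : Fin n, (T i).Adj a b

/-- The cyclic successor of a circle point. -/
def nxt {m : ℕ} (k : Fin m) : Fin m := ⟨(k.val + 1) % m, Nat.mod_lt _ k.pos⟩

/-- The number of boundary edges of `T`. -/
noncomputable def boundaryCount {n : ℕ} (T : SimpleGraph (WV n)) : ℕ :=
  Set.ncard {k : Fin (2*n-1) | T.Adj (some k) (some (nxt k))}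

/-- The number of radial edges of `T`. -/
noncomputable def radialCount {n : ℕ} (T : SimpleGraph (WV n)) : ℕ :=
  Set.ncard {k : Fin (2*n-1) | T.Adj none (some k)}

/-- The circle point with index `k` (mod `2n-1`). -/
def cir (n : ℕ) (h : 0 < 2*n-1) (k : ℕ) : WV n := some ⟨k % (2*n-1), Nat.mod_lt _ h⟩

/-- Signed side of point `p` with respect to the oriented line through `u`, `v`. -/
def sideVal (u v p : ℝ × ℝ) : ℝ :=
  (v.1 - u.1) * (p.2 - u.2) - (v.2 - u.2) * (p.1 - u.1)

end WheelCfg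

/-!
No chord is a diameter, since the number `2n - 1` of circle points is odd, so every chord cuts off
an arc of fewer than `n` steps not seen from the center. In a plane connected spanning graph, a
point strictly inside such an arc is not joined to the center, and its edges stay inside the arc;
hence every such arc contains a boundary edge.

If a graph has only one boundary edge, all these arcs contain it. Points outside a longest arc then
have no chords, so they are joined to the center, and so is an endpoint of that arc, through which
it must be connected to the rest: this gives `n` consecutive radial edges.

There are only `2n - 1` boundary edges for `n` graphs, so some graph has at most one of them and
therefore at least `n` of the `2n - 1` radial edges. Each of the other `n - 1` graphs has at least
one radial edge, so all these bounds are attained; as `1 < n`, the other graphs have at least two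
boundary edges each, and these bounds are attained too.
-/

theorem sum_ncard_le_card {ι κ : Type*} [Fintype ι] [Fintype κ] {P : ι → κ → Prop}
    (hP : ∀ k, {i | P i k}.Subsingleton) : ∑ i, {k | P i k}.ncard ≤ Fintype.card κ := by
  have hdisj : Pairwise (Function.onFun Disjoint fun i => {k | P i k}) := fun i j hij =>
    Set.disjoint_left.2 fun k hi hj => hij (hP k hi hj)
  rw [← finsum_eq_sum_of_fintype, ← Set.ncard_iUnion_of_finite (fun _ => Set.toFinite _) hdisj,
    ← Nat.card_eq_fintype_card]
  exact Set.ncard_le_card _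

theorem eq_and_forall_eq_of_sum_le {ι M : Type*} [Fintype ι] [AddCommMonoid M] [PartialOrder M]
    [IsOrderedCancelAddMonoid M] {f : ι → M} {i : ι} {a b : M} (hi : a ≤ f i)
    (hne : ∀ j ≠ i, b ≤ f j) (hsum : ∑ j, f j ≤ a + (Fintype.card ι - 1) • b) :
    f i = a ∧ ∀ j ≠ i, f j = b := by
  classical
  let g : ι → M := Function.update (fun _ => b) i a
  have hg : ∑ j, g j = a + (Fintype.card ι - 1) • b := by
    rw [Finset.sum_update_of_mem (Finset.mem_univ i), Finset.sum_const,
      ← Finset.compl_eq_univ_sdiff, Finset.card_compl, Finset.card_singleton]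
  have hle : ∀ j, g j ≤ f j := by
    intro j
    rcases eq_or_ne j i with rfl | hj
    · simpa [g] using hi
    · simpa [g, hj] using hne j hj
  have heq : ∀ j, g j = f j := fun j =>
    (Finset.sum_eq_sum_iff_of_le fun j _ => hle j).1
      ((Finset.sum_le_sum fun j _ => hle j).antisymm (hsum.trans hg.ge)) j (Finset.mem_univ j)
  exact ⟨by simpa [g] using (heq i).symm, fun j hj => by simpa [g, hj] using (heq j).symm⟩

namespace WheelCfg

section Geometry

theorem not_disjoint_openSegment_of_sideVal_pos {p q r s : ℝ × ℝ} (hpqr : 0 < sideVal p q r)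
    (hpqs : 0 < sideVal p q s) (hprs : 0 < sideVal p r s) (hqrs : 0 < sideVal q r s) :
    ¬ Disjoint (openSegment ℝ p r) (openSegment ℝ q s) := by
  rw [Set.not_disjoint_iff]
  have hsum : sideVal p q r + sideVal p r s = sideVal p q s + sideVal q r s := by
    unfold sideVal; ring
  have hD : 0 < sideVal p q s + sideVal q r s := by positivity
  refine ⟨(sideVal q r s / (sideVal p q s + sideVal q r s)) • p
      + (sideVal p q s / (sideVal p q s + sideVal q r s)) • r,
    ⟨_, _, div_pos hqrs hD, div_pos hpqs hD, ?_, rfl⟩,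
    ⟨sideVal p r s / (sideVal p q s + sideVal q r s),
      sideVal p q r / (sideVal p q s + sideVal q r s), div_pos hprs hD, div_pos hpqr hD, ?_, ?_⟩⟩
  · rw [← add_div, add_comm, div_self hD.ne']
  · rw [← add_div, add_comm, hsum, div_self hD.ne']
  · ext <;> simp only [Prod.fst_add, Prod.snd_add, Prod.smul_fst, Prod.smul_snd, smul_eq_mul] <;>
      field_simp <;> unfold sideVal <;> ring

/-- The point at angle `φ` on the circle with center `c` and radius `R`. -/
noncomputable def circlePt (c : ℝ × ℝ) (R φ : ℝ) : ℝ × ℝ :=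
  (c.1 + R * Real.cos φ, c.2 + R * Real.sin φ)

variable {c : ℝ × ℝ} {R x y z w : ℝ}

theorem sideVal_circlePt : sideVal (circlePt c R x) (circlePt c R y) (circlePt c R z) =
    4 * R ^ 2 * (Real.sin ((y - x) / 2) * Real.sin ((z - y) / 2) * Real.sin ((z - x) / 2)) := by
  have hexpand : sideVal (circlePt c R x) (circlePt c R y) (circlePt c R z) =
      R ^ 2 * ((Real.cos y - Real.cos x) * (Real.sin z - Real.sin x)
        - (Real.sin y - Real.sin x) * (Real.cos z - Real.cos x)) := by
    simp only [sideVal, circlePt]; ring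
  rw [hexpand, Real.cos_sub_cos y x, Real.sin_sub_sin y x, Real.cos_sub_cos z x,
    Real.sin_sub_sin z x, show (z - y) / 2 = (z + x) / 2 - (y + x) / 2 by ring, Real.sin_sub]
  ring

theorem sideVal_circlePt_pos (hR : R ≠ 0) (hxy : x < y) (hyz : y < z) (hzx : z < x + 2 * π) :
    0 < sideVal (circlePt c R x) (circlePt c R y) (circlePt c R z) := by
  have hsin : ∀ {s t : ℝ}, s < t → t < s + 2 * π → 0 < Real.sin ((t - s) / 2) := fun h h' =>
    Real.sin_pos_of_pos_of_lt_pi (by linarith) (by linarith)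
  have hxy' := hsin hxy (by linarith)
  have hyz' := hsin hyz (by linarith)
  have hxz' := hsin (hxy.trans hyz) hzx
  rw [sideVal_circlePt]
  positivity

theorem sideVal_circlePt_center_pos (hR : R ≠ 0) (hxy : x < y) (hyx : y < x + π) :
    0 < sideVal (circlePt c R x) (circlePt c R y) c := by
  have hsin : 0 < Real.sin (y - x) :=
    Real.sin_pos_of_pos_of_lt_pi (by linarith) (by linarith)
  have heq : sideVal (circlePt c R x) (circlePt c R y) c = R ^ 2 * Real.sin (y - x) := by
    rw [Real.sin_sub]; simp only [sideVal, circlePt]; ring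
  rw [heq]
  positivity

theorem not_disjoint_openSegment_chord_chord (hR : R ≠ 0) (hxy : x < y) (hyz : y < z)
    (hzw : z < w) (hwx : w < x + 2 * π) :
    ¬ Disjoint (openSegment ℝ (circlePt c R x) (circlePt c R z))
      (openSegment ℝ (circlePt c R y) (circlePt c R w)) := by
  apply not_disjoint_openSegment_of_sideVal_pos <;> apply sideVal_circlePt_pos hR <;> linarith

theorem not_disjoint_openSegment_chord_radius (hR : R ≠ 0) (hxy : x < y) (hyz : y < z)
    (hzx : z < x + π) :
    ¬ Disjoint (openSegment ℝ (circlePt c R x) (circlePt c R z))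
      (openSegment ℝ (circlePt c R y) c) := by
  have := Real.pi_pos
  apply not_disjoint_openSegment_of_sideVal_pos (sideVal_circlePt_pos hR hxy hyz (by linarith)) <;>
    apply sideVal_circlePt_center_pos hR <;> linarith

end Geometry

section CyclicIndex

open scoped Fin.CommRing

theorem intCast_fin_inj_of_abs_sub_lt {m : ℕ} [NeZero m] {j k : ℤ} (hjk : |j - k| < m)
    (h : (j : Fin m) = (k : Fin m)) : j = k :=
  sub_eq_zero.1 <| Int.eq_zero_of_abs_lt_dvd
    ((CharP.intCast_eq_intCast (Fin m) m).1 h).symm.dvd hjk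

theorem nxt_intCast {m : ℕ} [NeZero m] (k : ℤ) : nxt (k : Fin m) = ((k + 1 : ℤ) : Fin m) := by
  have hnxt : ∀ j : Fin m, nxt j = j + 1 := fun j => by simp [Fin.ext_iff, nxt, Fin.val_add]
  rw [hnxt, Int.cast_add, Int.cast_one]

theorem exists_mem_Ico_intCast_eq {m : ℕ} [NeZero m] (a : ℤ) (j : Fin m) :
    ∃ k ∈ Set.Ico a (a + m), (k : Fin m) = j := by
  obtain ⟨t, ht0, htm, ht⟩ := Int.existsUnique_equiv ((j : ℤ) - a)
    (Int.natCast_pos.2 (NeZero.pos m))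
  refine ⟨a + t, ⟨by lia, by lia⟩, ?_⟩
  rw [(CharP.intCast_eq_intCast (Fin m) m).2 (ht.add_left a)]
  simp

end CyclicIndex

instance neZero_two_mul_sub_one {n : ℕ} [NeZero n] : NeZero (2 * n - 1) :=
  ⟨by have := NeZero.pos n; lia⟩

section Circ

open scoped Fin.CommRing

variable {n : ℕ} [NeZero n]

/-- The circle point with integer index `k`, read modulo `2n - 1`: integer indices let arcs of the
circle be handled as intervals. -/
def circ (k : ℤ) : WV n := some (k : Fin (2 * n - 1))

theorem natCast_two_mul_sub_one : ((2 * n - 1 : ℕ) : ℤ) = 2 * n - 1 := by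
  have := NeZero.pos n
  lia

theorem circ_add_period (k : ℤ) : (circ (k + (2 * n - 1)) : WV n) = circ k := by
  rw [circ, circ, ← natCast_two_mul_sub_one, Int.cast_add, Int.cast_natCast,
    CharP.cast_eq_zero, add_zero]

theorem eq_of_circ_eq {j k : ℤ} (h : (circ j : WV n) = circ k) (hjk : j - k < 2 * n - 1)
    (hkj : k - j < 2 * n - 1) : j = k :=
  intCast_fin_inj_of_abs_sub_lt
    (abs_lt.2 ⟨by rw [natCast_two_mul_sub_one]; lia, by rwa [natCast_two_mul_sub_one]⟩)
    (Option.some.inj h)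

theorem exists_circ_eq (a : ℤ) (j : Fin (2 * n - 1)) :
    ∃ k, a ≤ k ∧ k < a + (2 * n - 1) ∧ circ k = some j := by
  obtain ⟨k, ⟨hak, hka⟩, hk⟩ := exists_mem_Ico_intCast_eq a j
  exact ⟨k, hak, by rwa [natCast_two_mul_sub_one] at hka, congrArg some hk⟩

/-- The polar angle of the point of index `x` of a wheel with initial angle `θ`. -/
noncomputable def wheelAngle (n : ℕ) (θ x : ℝ) : ℝ := θ + 2 * π * x / (2 * n - 1)

theorem two_mul_sub_one_pos : (0 : ℝ) < 2 * n - 1 := by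
  have : (1 : ℝ) ≤ n := mod_cast NeZero.pos n
  linarith

theorem strictMono_wheelAngle (θ : ℝ) : StrictMono (wheelAngle n θ) := by
  intro x y hxy
  have := two_mul_sub_one_pos (n := n)
  have := Real.pi_pos
  unfold wheelAngle
  gcongr

theorem wheelAngle_add_mul_period (θ x t : ℝ) :
    wheelAngle n θ (x + t * (2 * n - 1)) = wheelAngle n θ x + t * (2 * π) := by
  have := (two_mul_sub_one_pos (n := n)).ne'
  unfold wheelAngle
  field_simp
  ring

theorem wpos_circ (c : ℝ × ℝ) (R θ : ℝ) (k : ℤ) :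
    wpos n c R θ (circ k) = circlePt c R (wheelAngle n θ k) := by
  have hk : (k : ℝ) = ((k : Fin (2 * n - 1)).val : ℝ) + (k / (2 * n - 1) : ℤ) * (2 * n - 1) := by
    have hval : ((k : Fin (2 * n - 1)).val : ℤ) = k % (2 * n - 1) := by
      rw [Fin.val_intCast, natCast_two_mul_sub_one, Int.toNat_of_nonneg]
      exact Int.emod_nonneg _ (by have := NeZero.pos n; lia)
    have := Int.emod_add_ediv_mul k (2 * n - 1)
    rw [← hval] at this
    exact_mod_cast this.symm
  rw [hk, wheelAngle_add_mul_period]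
  simp only [circlePt, Real.cos_add_int_mul_two_pi, Real.sin_add_int_mul_two_pi]
  rfl

end Circ

section CrossFree

variable {n : ℕ} [NeZero n] {T : SimpleGraph (WV n)}

/-- The combinatorial content of being non-crossing for a graph on the wheel. In `chord_radial`,
the bound `v < u + n` says that the center and the arc from `u` to `v` lie on opposite sides of the
chord. -/
structure CrossFree (T : SimpleGraph (WV n)) : Prop where
  chord_chord {u a v b : ℤ} : T.Adj (circ u) (circ v) → u < a → a < v → v < b →
    b < u + (2 * n - 1) → ¬ T.Adj (circ a) (circ b)
  chord_radial {u a v : ℤ} : T.Adj (circ u) (circ v) → u < a → a < v → v < u + n →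
    ¬ T.Adj none (circ a)

theorem NonCrossing.crossFree {c : ℝ × ℝ} {R θ : ℝ} (hR : R ≠ 0)
    (hT : NonCrossing (wpos n c R θ) T) : CrossFree T where
  chord_chord {u a v b} huv hua hav hvb hbu hab := by
    have hmono {x y : ℤ} (h : x < y) : wheelAngle n θ x < wheelAngle n θ y :=
      strictMono_wheelAngle θ (mod_cast h)
    have hua' : (circ u : WV n) ≠ circ a := fun h => hua.ne (eq_of_circ_eq h (by lia) (by lia))
    have hub' : (circ u : WV n) ≠ circ b := fun h =>
      (hua.trans (hav.trans hvb)).ne (eq_of_circ_eq h (by lia) (by lia))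
    have hdisj := hT _ _ _ _ huv hab (by simp [hua', hub'])
    simp only [wpos_circ] at hdisj
    refine not_disjoint_openSegment_chord_chord hR (hmono hua) (hmono hav) (hmono hvb) ?_ hdisj
    calc wheelAngle n θ b < wheelAngle n θ (u + 1 * (2 * n - 1)) :=
          strictMono_wheelAngle θ (by rw [one_mul]; exact_mod_cast hbu)
      _ = wheelAngle n θ u + 2 * π := by rw [wheelAngle_add_mul_period, one_mul]
  chord_radial {u a v} huv hua hav hvu ha := by
    have hmono {x y : ℤ} (h : x < y) : wheelAngle n θ x < wheelAngle n θ y :=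
      strictMono_wheelAngle θ (mod_cast h)
    have hdisj := hT _ _ _ _ huv ha.symm (by simp [circ])
    simp only [wpos_circ] at hdisj
    refine not_disjoint_openSegment_chord_radius hR (hmono hua) (hmono hav) ?_ hdisj
    have hvu' : (v : ℝ) + 1 ≤ u + n := mod_cast hvu
    calc wheelAngle n θ v < wheelAngle n θ (u + 1 / 2 * (2 * n - 1)) :=
          strictMono_wheelAngle θ (by linarith)
      _ = wheelAngle n θ u + π := by rw [wheelAngle_add_mul_period]; ring

/-- A chord of `T` written with integer indices such that the arc from `u` to `v` is the one it
separates from the center. -/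
structure IsShortChord (T : SimpleGraph (WV n)) (u v : ℤ) : Prop where
  lt : u < v
  lt_add : v < u + n
  adj : T.Adj (circ u) (circ v)

theorem exists_isShortChord_of_adj {x : ℤ} {j : Fin (2 * n - 1)} (h : T.Adj (circ x) (some j)) :
    ∃ z, IsShortChord T x z ∨ IsShortChord T z x := by
  obtain ⟨y, hxy, hyx, hy⟩ := exists_circ_eq x j
  rw [← hy] at h
  have hne : x ≠ y := fun hxy => h.ne (congrArg circ hxy)
  rcases lt_or_ge y (x + n) with hlt | hge
  · exact ⟨y, .inl ⟨by lia, hlt, h⟩⟩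
  · rw [← sub_add_cancel y (2 * n - 1), circ_add_period] at h
    exact ⟨y - (2 * n - 1), .inr ⟨by lia, by lia, h.symm⟩⟩

theorem adj_none_or_exists_isShortChord (hT : T.Preconnected) (x : ℤ) :
    T.Adj none (circ x) ∨ ∃ z, IsShortChord T x z ∨ IsShortChord T z x := by
  obtain ⟨_ | j, hj⟩ := hT.exists_adj_of_nontrivial (circ x)
  · exact .inl hj.symm
  · exact .inr (exists_isShortChord_of_adj hj)

theorem IsShortChord.exists_boundary (hT : T.Preconnected) (hT' : CrossFree T) {u v : ℤ}
    (h : IsShortChord T u v) : ∃ k, u ≤ k ∧ k < v ∧ T.Adj (circ k) (circ (k + 1)) := by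
  obtain ⟨huv, hvu, hadj⟩ := h
  rcases eq_or_ne v (u + 1) with rfl | hne
  · exact ⟨u, le_rfl, huv, hadj⟩
  rcases adj_none_or_exists_isShortChord hT (u + 1) with hrad | ⟨z, hz | hz⟩
  · exact absurd hrad (hT'.chord_radial hadj (by lia) (by lia) hvu)
  · have := hz.lt
    have := hz.lt_add
    rcases le_or_gt z v with hzv | hvz
    · obtain ⟨k, huk, hkz, hk⟩ := IsShortChord.exists_boundary hT hT' hz
      exact ⟨k, by lia, by lia, hk⟩
    · exact absurd hz.adj (hT'.chord_chord hadj (by lia) (by lia) hvz (by lia))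
  · obtain ⟨hlt, hlt_add, hz'⟩ := hz
    rcases eq_or_ne z u with rfl | hzu
    · exact ⟨z, le_rfl, huv, hz'⟩
    · exact absurd hadj (hT'.chord_chord hz' (by lia) (by lia) (by lia) (by lia))
termination_by (v - u).toNat

open scoped Fin.CommRing in
theorem mem_boundary_iff {k : ℤ} :
    (k : Fin (2 * n - 1)) ∈ {k : Fin (2 * n - 1) | T.Adj (some k) (some (nxt k))} ↔
      T.Adj (circ k) (circ (k + 1)) := by
  rw [Set.mem_ofPred_eq, nxt_intCast, circ, circ]

theorem eq_of_boundaryCount_le_one (h : boundaryCount T ≤ 1) {j k : ℤ}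
    (hj : T.Adj (circ j) (circ (j + 1))) (hk : T.Adj (circ k) (circ (k + 1)))
    (hjk : j - k < 2 * n - 1) (hkj : k - j < 2 * n - 1) : j = k :=
  eq_of_circ_eq
    (congrArg some ((Set.ncard_le_one_iff).1 h (mem_boundary_iff.2 hj) (mem_boundary_iff.2 hk)))
    hjk hkj

theorem boundaryCount_pos (hT : T.Preconnected) (hT' : CrossFree T)
    (h : radialCount T < 2 * n - 1) : 0 < boundaryCount T := by
  obtain ⟨j, hj⟩ : ∃ j : Fin (2 * n - 1), ¬ T.Adj none (some j) := by
    by_contra! hall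
    simp [radialCount, hall] at h
  obtain ⟨x, -, -, hx⟩ := exists_circ_eq 0 j
  obtain ⟨u, v, huv⟩ : ∃ u v, IsShortChord T u v := by
    rcases adj_none_or_exists_isShortChord hT x with hrad | ⟨z, hz | hz⟩
    · exact absurd (hx ▸ hrad) hj
    · exact ⟨x, z, hz⟩
    · exact ⟨z, x, hz⟩
  obtain ⟨k, -, -, hk⟩ := huv.exists_boundary hT hT'
  exact (Set.ncard_pos).2 ⟨_, mem_boundary_iff.2 hk⟩

theorem radialCount_pos (hT : T.Preconnected) : 0 < radialCount T := by
  obtain ⟨_ | k, hk⟩ := hT.exists_adj_of_nontrivial none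
  · exact absurd rfl hk.ne
  · exact (Set.ncard_pos).2 ⟨k, hk⟩

/-- A short chord of `T` cutting off as many steps of the circle as possible. -/
structure IsLongestShortChord (T : SimpleGraph (WV n)) (u v : ℤ) : Prop
    extends IsShortChord T u v where
  sub_le {u' v' : ℤ} : IsShortChord T u' v' → v' - u' ≤ v - u

theorem IsShortChord.exists_isLongestShortChord {u v : ℤ} (h : IsShortChord T u v) :
    ∃ u' v', IsLongestShortChord T u' v' := by
  obtain ⟨d, ⟨u', v', h', rfl⟩, hmax⟩ := Int.exists_greatest_of_bdd
    (P := fun d => ∃ u v, IsShortChord T u v ∧ v - u = d)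
    ⟨n, by rintro _ ⟨u, v, huv, rfl⟩; have := huv.lt_add; lia⟩ ⟨v - u, u, v, h, rfl⟩
  exact ⟨u', v', h', fun h'' => hmax _ ⟨_, _, h'', rfl⟩⟩

section OneBoundaryEdge

variable (hT : T.Preconnected) (hT' : CrossFree T) (hB : boundaryCount T ≤ 1)
include hT hT' hB

namespace IsLongestShortChord

variable {u v : ℤ} (h : IsLongestShortChord T u v)
include h

/-- The arc cut off by a chord at an outside point would contain the same boundary edge as the
longest arc, and hence, being no longer, its chord would cross the longest one. -/
theorem not_adj_some_of_outside {w : ℤ} (hvw : v < w) (hwu : w < u + (2 * n - 1))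
    (j : Fin (2 * n - 1)) : ¬ T.Adj (circ w) (some j) := by
  intro hj
  have := h.lt_add
  obtain ⟨b, hub, hbv, hb⟩ := h.exists_boundary hT hT'
  obtain ⟨z, hz | hz⟩ := exists_isShortChord_of_adj hj
  · obtain ⟨b', hwb', hbz', hb'⟩ := hz.exists_boundary hT hT'
    have := hz.lt_add
    have := h.sub_le hz
    have heq : b' - (2 * n - 1) = b := by
      refine eq_of_boundaryCount_le_one hB ?_ hb (by lia) (by lia)
      rwa [← circ_add_period (b' - _), ← circ_add_period (b' - _ + 1), sub_add_cancel,
        sub_add_eq_add_sub, sub_add_cancel]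
    have hadj := h.adj
    rw [← circ_add_period u, ← circ_add_period v] at hadj
    exact hT'.chord_chord hz.adj hwu (by lia) (by lia) (by lia) hadj
  · obtain ⟨b', hzb', hbw', hb'⟩ := hz.exists_boundary hT hT'
    have := hz.lt_add
    have := h.sub_le hz
    have heq : b' = b := eq_of_boundaryCount_le_one hB hb' hb (by lia) (by lia)
    exact hT'.chord_chord h.adj (by lia) (by lia) hvw hwu hz.adj

theorem adj_none_of_outside {w : ℤ} (hvw : v < w) (hwu : w < u + (2 * n - 1)) :
    T.Adj none (circ w) := by
  obtain ⟨_ | j, hj⟩ := hT.exists_adj_of_nontrivial (circ w)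
  · exact hj.symm
  · exact absurd hj (h.not_adj_some_of_outside hT hT' hB hvw hwu j)

theorem adj_none_left_or_right : T.Adj none (circ u) ∨ T.Adj none (circ v) := by
  obtain ⟨p⟩ := hT (circ u) none
  obtain ⟨d, -, ⟨k, huk, hkv, hk⟩, hout⟩ := p.exists_boundary_dart
    {x | ∃ k, u ≤ k ∧ k ≤ v ∧ circ k = x} ⟨u, le_rfl, h.lt.le, rfl⟩
    (by rintro ⟨k, -, -, hk⟩; cases hk)
  have hd := d.adj
  rw [← hk] at hd
  rcases hsnd : d.snd with _ | j <;> rw [hsnd] at hd hout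
  · rcases huk.eq_or_lt with rfl | huk
    · exact .inl hd.symm
    rcases hkv.eq_or_lt with rfl | hkv
    · exact .inr hd.symm
    exact absurd hd.symm (hT'.chord_radial h.adj huk hkv h.lt_add)
  · obtain ⟨w, huw, hwu, hw⟩ := exists_circ_eq u j
    rw [← hw] at hd hout
    have hvw : v < w := by
      by_contra! hwv
      exact hout ⟨w, huw, hwv, rfl⟩
    exact absurd hd.symm (h.not_adj_some_of_outside hT hT' hB hvw hwu _)

end IsLongestShortChord

theorem exists_forall_lt_adj_none_circ : ∃ s : ℤ, ∀ t : ℕ, t < n → T.Adj none (circ (s + t)) := by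
  by_cases hchord : ∃ u v, IsShortChord T u v
  · obtain ⟨_, _, hshort⟩ := hchord
    obtain ⟨u, v, h⟩ := hshort.exists_isLongestShortChord
    have := h.lt_add
    have hout {w : ℤ} := h.adj_none_of_outside hT hT' hB (w := w)
    rcases h.adj_none_left_or_right hT hT' hB with hu | hv
    · refine ⟨u + n, fun t ht => ?_⟩
      rcases eq_or_ne (u + n + t) (u + (2 * n - 1)) with heq | hne
      · rwa [heq, circ_add_period]
      · exact hout (by lia) (by lia)
    · refine ⟨v, fun t ht => ?_⟩
      rcases eq_or_ne t 0 with rfl | hne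
      · simpa using hv
      · have := h.lt
        exact hout (by lia) (by lia)
  · push Not at hchord
    refine ⟨0, fun t _ => (adj_none_or_exists_isShortChord hT _).resolve_right ?_⟩
    rintro ⟨z, hz | hz⟩
    exacts [hchord _ _ hz, hchord _ _ hz]

end OneBoundaryEdge

end CrossFree

section Arc

/-- The set of the `n` cyclically consecutive elements of `Fin m` starting at `s` modulo `m`. -/
def arc (m s n : ℕ) : Set (Fin m) := {k | ∃ t < n, (s + t) % m = k.val}

theorem ncard_arc {m n : ℕ} (s : ℕ) (hnm : n ≤ m) : (arc m s n).ncard = n := by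
  rcases Nat.eq_zero_or_pos m with rfl | hm
  · simp [Nat.le_zero.1 hnm, arc]
  have himage : arc m s n = (fun t => ⟨(s + t) % m, Nat.mod_lt _ hm⟩) '' Set.Iio n := by
    ext k
    simp [arc, Fin.ext_iff]
  have hinj : Set.InjOn (fun t => (⟨(s + t) % m, Nat.mod_lt _ hm⟩ : Fin m)) (Set.Iio n) := by
    intro t ht t' ht' htt'
    exact (Nat.ModEq.add_left_cancel' s (Fin.val_eq_of_eq htt')).eq_of_lt_of_lt
      (ht.trans_le hnm) (ht'.trans_le hnm)
  rw [himage, hinj.ncard_image, Set.ncard_Iio_nat]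

variable {n : ℕ} [NeZero n] {T : SimpleGraph (WV n)}

open scoped Fin.CommRing in
theorem exists_arc_subset_radial (hT : T.Preconnected) (hT' : CrossFree T)
    (hB : boundaryCount T ≤ 1) : ∃ s, arc (2 * n - 1) s n ⊆ {k | T.Adj none (some k)} := by
  obtain ⟨s, hs⟩ := exists_forall_lt_adj_none_circ hT hT' hB
  refine ⟨((s : Fin (2 * n - 1)) : ℕ), ?_⟩
  rintro k ⟨t, ht, hk⟩
  have hcirc : circ (s + t) = some k := by
    rw [circ, Int.cast_add, Int.cast_natCast, ← Fin.cast_val_eq_self (s : Fin (2 * n - 1)),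
      ← Nat.cast_add]
    exact congrArg some (Fin.ext (by rw [Fin.val_natCast, hk]))
  rw [Set.mem_ofPred_eq, ← hcirc]
  exact hs t ht

theorem le_radialCount (hT : T.Preconnected) (hT' : CrossFree T) (hB : boundaryCount T ≤ 1) :
    n ≤ radialCount T := by
  obtain ⟨s, hs⟩ := exists_arc_subset_radial hT hT' hB
  calc n = (arc (2 * n - 1) s n).ncard := (ncard_arc s (by have := NeZero.pos n; lia)).symm
    _ ≤ radialCount T := Set.ncard_le_ncard hs

theorem exists_radial_eq_arc (hT : T.Preconnected) (hT' : CrossFree T)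
    (hB : boundaryCount T ≤ 1) (hR : radialCount T = n) :
    ∃ s, {k | T.Adj none (some k)} = arc (2 * n - 1) s n := by
  obtain ⟨s, hs⟩ := exists_arc_subset_radial hT hT' hB
  refine ⟨s, (Set.eq_of_subset_of_ncard_le hs ?_).symm⟩
  rw [ncard_arc s (by have := NeZero.pos n; lia)]
  exact hR.le

end Arc

end WheelCfg

open WheelCfg in
theorem stmt5_general (n : ℕ) (hn : 2 ≤ n) (c : ℝ × ℝ) (R θ : ℝ) (hR : R ≠ 0)
    (T : Fin n → SimpleGraph (WV n))
    (hdisj : ∀ a b, Radial a b ∨ Boundary a b → {i | (T i).Adj a b}.Subsingleton)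
    (hconn : ∀ i, (T i).Connected) (hplane : ∀ i, NonCrossing (wpos n c R θ) (T i)) :
    ∃! i : Fin n,
      boundaryCount (T i) = 1 ∧ radialCount (T i) = n ∧
      (∃ s : ℕ, ∀ k : Fin (2 * n - 1),
        (T i).Adj none (some k) ↔ ∃ t < n, (s + t) % (2 * n - 1) = k.val) ∧
      (∀ j : Fin n, j ≠ i → boundaryCount (T j) = 2 ∧ radialCount (T j) = 1) := by
  have : NeZero n := ⟨by lia⟩
  have hfree i : CrossFree (T i) := (hplane i).crossFree hR
  have hsumB : ∑ i, boundaryCount (T i) ≤ 2 * n - 1 := by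
    simpa [boundaryCount] using
      sum_ncard_le_card fun k => hdisj (some k) (some (nxt k)) (.inr (.inl rfl))
  have hsumR : ∑ i, radialCount (T i) ≤ 2 * n - 1 := by
    simpa [radialCount] using sum_ncard_le_card fun k => hdisj none (some k) (.inl trivial)
  obtain ⟨i, -, hi⟩ : ∃ i ∈ Finset.univ, boundaryCount (T i) < 2 :=
    Finset.exists_lt_of_sum_lt (by simp; lia)
  have hle (j : Fin n) := le_radialCount (hconn j).preconnected (hfree j)
  obtain ⟨hRi, hRj⟩ := eq_and_forall_eq_of_sum_le (f := fun j => radialCount (T j)) (hle i (by lia))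
    (fun j _ => radialCount_pos (hconn j).preconnected) (hsumR.trans (by simp; lia))
  have hBi := boundaryCount_pos (hconn i).preconnected (hfree i) (by lia)
  obtain ⟨hBi, hBj⟩ := eq_and_forall_eq_of_sum_le (f := fun j => boundaryCount (T j)) (b := 2) hBi
    (fun j hj => by have := hle j; have := hRj j hj; lia) (hsumB.trans (by simp; lia))
  obtain ⟨s, hs⟩ := exists_radial_eq_arc (hconn i).preconnected (hfree i) (by lia) hRi
  refine ⟨i, ⟨hBi, hRi, ⟨s, Set.ext_iff.1 hs⟩, fun j hj => ⟨hBj j hj, hRj j hj⟩⟩, ?_⟩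
  rintro j ⟨-, hj, -⟩
  by_contra hji
  have := hRj j hji
  lia

open WheelCfg in
/-- In any partition of the complete geometric graph on a regular wheel configuration into
`n` plane spanning trees, there is a unique tree having exactly one boundary edge and
exactly `n` radial edges going to consecutive circle points, and every other tree has
exactly two boundary edges and exactly one radial edge. -/
theorem stmt5 (n : ℕ) (hn : 2 ≤ n) (c : ℝ × ℝ) (R θ : ℝ) (hR : 0 < R)
    (T : Fin n → SimpleGraph (WV n)) (hpart : IsPartition T)
    (hplane : ∀ i, PlaneSpanningTree (wpos n c R θ) (T i)) :
    ∃! i : Fin n,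
      boundaryCount (T i) = 1 ∧ radialCount (T i) = n ∧
      (∃ s : ℕ, ∀ k : Fin (2*n-1),
        (T i).Adj none (some k) ↔ ∃ t < n, (s + t) % (2*n-1) = k.val) ∧
      (∀ j : Fin n, j ≠ i → boundaryCount (T j) = 2 ∧ radialCount (T j) = 1) :=
  stmt5_general n hn c R θ hR.ne' T
    (fun a b _ _ hi _ hj => (hpart a b hi.ne).unique hi hj)
    (fun i => (hplane i).1.connected) fun i => (hplane i).2
end

section
/- Let P be a set of 2n points in regular wheel configuration, n ≥ 2, and let T be any w-caterpillar on 2n vertices. Then the edges of the complete geometric graph GW_{2n} on P can be partitioned into n plane spanning trees T_1, ..., T_n such that T_1, ..., T_{n−1} are each isomorphic (as abstract graphs) to T, and T_n is a plane spanning caterpillar with exactly one boundary edge. -/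
open scoped Real

namespace GraphDefs

/-- Degree of a vertex, via `Set.ncard` (no decidability assumptions). -/
noncomputable def gdeg {V : Type*} (G : SimpleGraph V) (v : V) : ℕ := (G.neighborSet v).ncard

/-- A caterpillar: a tree having a path which contains all vertices of degree `≥ 2`
(equivalently, removing all leaves yields a path). -/
def IsCaterpillar {V : Type*} (G : SimpleGraph V) : Prop :=
  G.IsTree ∧ ∃ (u v : V) (p : G.Walk u v), p.IsPath ∧ ∀ w, 2 ≤ gdeg G w → w ∈ p.support

/-- The graph obtained from `T` by deleting the edges of the path `u1 u2 u3 u4`. -/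
def delP4 {V : Type*} (T : SimpleGraph V) (u1 u2 u3 u4 : V) : SimpleGraph V :=
  T.deleteEdges {s(u1,u2), s(u2,u3), s(u3,u4)}

/-- Witness for `P_4`-symmetry: in `T` minus the path edges, `u1` and `ua` are isolated,
the components of `u3` and `ub` are nontrivial, distinct, cover everything else, and there is
a graph isomorphism between them sending `u3` to `ub`. -/
def P4SymWitness {V : Type*} (T : SimpleGraph V) (u1 u2 u3 u4 ua ub : V) : Prop :=
  (∀ w, ¬ (delP4 T u1 u2 u3 u4).Adj u1 w) ∧
  (∀ w, ¬ (delP4 T u1 u2 u3 u4).Adj ua w) ∧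
  (∃ w, (delP4 T u1 u2 u3 u4).Adj u3 w) ∧
  (∃ w, (delP4 T u1 u2 u3 u4).Adj ub w) ∧
  (delP4 T u1 u2 u3 u4).connectedComponentMk u3 ≠ (delP4 T u1 u2 u3 u4).connectedComponentMk ub ∧
  (∀ v : V, v = u1 ∨ v = ua ∨
      v ∈ ((delP4 T u1 u2 u3 u4).connectedComponentMk u3).supp ∨
      v ∈ ((delP4 T u1 u2 u3 u4).connectedComponentMk ub).supp) ∧
  ∃ φ : ((delP4 T u1 u2 u3 u4).induce ((delP4 T u1 u2 u3 u4).connectedComponentMk u3).supp) ≃g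
        ((delP4 T u1 u2 u3 u4).induce ((delP4 T u1 u2 u3 u4).connectedComponentMk ub).supp),
    (φ ⟨u3, rfl⟩).1 = ub

/-- A `P_4`-symmetric tree, recording the 4-path: the case `i = 4` (Type-1) uses
isolated vertices `u1, u4` and components of `u3, u2`; the case `i = 2` (Type-2) uses
isolated vertices `u1, u2` and components of `u3, u4`. -/
def IsP4SymmetricVia {V : Type*} (T : SimpleGraph V) (u1 u2 u3 u4 : V) : Prop :=
  u1 ≠ u2 ∧ u1 ≠ u3 ∧ u1 ≠ u4 ∧ u2 ≠ u3 ∧ u2 ≠ u4 ∧ u3 ≠ u4 ∧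
  T.Adj u1 u2 ∧ T.Adj u2 u3 ∧ T.Adj u3 u4 ∧
  (P4SymWitness T u1 u2 u3 u4 u4 u2 ∨ P4SymWitness T u1 u2 u3 u4 u2 u4)

/-- A `w`-caterpillar: a `P_4`-symmetric tree `T` such that `T` or `T - u1` is a caterpillar. -/
def IsWCaterpillar {V : Type*} (T : SimpleGraph V) : Prop :=
  T.IsTree ∧ ∃ u1 u2 u3 u4 : V, IsP4SymmetricVia T u1 u2 u3 u4 ∧
    (IsCaterpillar T ∨ IsCaterpillar (T.induce {v | v ≠ u1}))

/-- A double star: a tree with two adjacent vertices `v, w` such that every other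
vertex is a leaf adjacent to `v` or `w`. -/
def IsDoubleStar {V : Type*} (G : SimpleGraph V) : Prop :=
  G.IsTree ∧ ∃ v w : V, v ≠ w ∧ G.Adj v w ∧
    ∀ u, u ≠ v → u ≠ w → gdeg G u = 1 ∧ (G.Adj v u ∨ G.Adj w u)

/-- A symmetric tree: an edge `vw` such that the two components of `T - vw` admit a
graph isomorphism mapping `v` to `w`. -/
def IsSymmetricTree {V : Type*} (T : SimpleGraph V) : Prop :=
  T.IsTree ∧ ∃ v w : V, T.Adj v w ∧
    ∃ φ : ((T.deleteEdges {s(v,w)}).induce ((T.deleteEdges {s(v,w)}).connectedComponentMk v).supp) ≃g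
          ((T.deleteEdges {s(v,w)}).induce ((T.deleteEdges {s(v,w)}).connectedComponentMk w).supp),
      (φ ⟨v, rfl⟩).1 = w

/-- `S_2(m, m)`: the double star `S(m,m)` with its central edge subdivided by two
degree-2 vertices: centers `v, w` of degree `m+1`, subdivision path `v c1 c2 w`,
and all other vertices are leaves adjacent to `v` or `w`. -/
def IsS2DoubleStar {V : Type*} (G : SimpleGraph V) (m : ℕ) : Prop :=
  G.IsTree ∧ ∃ v c1 c2 w : V,
    v ≠ c1 ∧ v ≠ c2 ∧ v ≠ w ∧ c1 ≠ c2 ∧ c1 ≠ w ∧ c2 ≠ w ∧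
    G.Adj v c1 ∧ G.Adj c1 c2 ∧ G.Adj c2 w ∧
    gdeg G v = m + 1 ∧ gdeg G w = m + 1 ∧ gdeg G c1 = 2 ∧ gdeg G c2 = 2 ∧
    ∀ u, u ≠ v → u ≠ c1 → u ≠ c2 → u ≠ w → gdeg G u = 1 ∧ (G.Adj v u ∨ G.Adj w u)

end GraphDefs

/-!
Number the circle points cyclically by `0, …, 2d`, where `n = d + 1`. A caterpillar with `e + 1`
vertices has a zigzag drawing on the consecutive points `0, …, e` which uses every edge length
`1, …, e` exactly once. Deleting the 4-path from a `w`-caterpillar leaves two isomorphic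
caterpillars, so these can be drawn as translates of one zigzag; restoring the path makes them the
two zigzags on `0, …, d` and on `d, …, 2d`, with left ends `x e` and `x e + d` of the chord of
length `e`, plus one radial edge. In `d` consecutive rotations of this tree the left end of the
chords of length `e` takes all values but one modulo `2d + 1`, and the radial edge takes `d` values.
What is left over is one chord of each length, again forming a zigzag, and `d + 1` radial edges:
a plane caterpillar.
-/

namespace WheelPartition

open WheelCfg GraphDefs

/-! ### Chords and radii of a circle -/

lemma disjoint_openSegment_of_le_of_lt {E : Type*} [AddCommGroup E] [Module ℝ E]
    (f : E →ₗ[ℝ] ℝ) {t : ℝ} {u v p q : E} (hu : t ≤ f u) (hv : t ≤ f v) (hp : f p ≤ t)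
    (hq : f q ≤ t) (hpq : f p < t ∨ f q < t) :
    Disjoint (openSegment ℝ u v) (openSegment ℝ p q) := by
  refine Set.disjoint_left.2 fun z hz hz' => ?_
  have hge : t ≤ f z := (convex_halfSpace_ge f.isLinear t).openSegment_subset hu hv hz
  obtain ⟨a, b, ha, hb, hab, rfl⟩ := hz'
  have hlt : a * f p + b * f q < a * t + b * t := by
    rcases hpq with h | h
    · exact add_lt_add_of_lt_of_le (by gcongr) (by gcongr)
    · exact add_lt_add_of_le_of_lt (by gcongr) (by gcongr)
  rw [← add_mul, hab, one_mul] at hlt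
  rw [map_add, map_smul, map_smul, smul_eq_mul, smul_eq_mul] at hge
  exact hge.not_gt hlt

/-- The point at angle `φ` on the circle with centre `c` and radius `R`. -/
noncomputable def circlePoint (c : ℝ × ℝ) (R φ : ℝ) : ℝ × ℝ :=
  (c.1 + R * Real.cos φ, c.2 + R * Real.sin φ)

/-- The coordinate in direction `ψ`: the inner product with the unit vector at angle `ψ`. Its level
lines serve as separating lines of segments. -/
noncomputable def directionForm (ψ : ℝ) : ℝ × ℝ →ₗ[ℝ] ℝ :=
  Real.cos ψ • LinearMap.fst ℝ ℝ ℝ + Real.sin ψ • LinearMap.snd ℝ ℝ ℝ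

section Geometry

variable {c : ℝ × ℝ} {R α β γ δ φ : ℝ}

lemma directionForm_circlePoint (ψ : ℝ) :
    directionForm ψ (circlePoint c R φ) = directionForm ψ c + R * Real.cos (φ - ψ) := by
  simp only [directionForm, circlePoint, LinearMap.add_apply, LinearMap.smul_apply,
    LinearMap.fst_apply, LinearMap.snd_apply, smul_eq_mul, Real.cos_sub]
  ring

lemma cos_half_sub_cos_sub_midpoint :
    Real.cos ((β - α) / 2) - Real.cos (γ - (α + β) / 2) =
      2 * (Real.sin ((γ - α) / 2) * Real.sin ((γ - β) / 2)) := by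
  rw [Real.cos_sub_cos, show ((β - α) / 2 + (γ - (α + β) / 2)) / 2 = (γ - α) / 2 by ring,
    show ((β - α) / 2 - (γ - (α + β) / 2)) / 2 = -((γ - β) / 2) by ring, Real.sin_neg]
  ring

lemma cos_sub_midpoint_le (hα : α ∈ Set.Ico φ (φ + 2 * π)) (hβ : β ∈ Set.Ico φ (φ + 2 * π))
    (hγ : γ ∈ Set.Ico φ (φ + 2 * π)) (hout : γ ≤ α ∧ γ ≤ β ∨ α ≤ γ ∧ β ≤ γ) :
    Real.cos (γ - (α + β) / 2) ≤ Real.cos ((β - α) / 2) := by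
  rw [← sub_nonneg, cos_half_sub_cos_sub_midpoint]
  obtain ⟨⟨_, _⟩, ⟨_, _⟩, ⟨_, _⟩⟩ := And.intro hα (And.intro hβ hγ)
  refine mul_nonneg zero_le_two ?_
  rcases hout with ⟨h₁, h₂⟩ | ⟨h₁, h₂⟩
  · exact mul_nonneg_of_nonpos_of_nonpos
      (Real.sin_nonpos_of_nonpos_of_neg_pi_le (by linarith) (by linarith))
      (Real.sin_nonpos_of_nonpos_of_neg_pi_le (by linarith) (by linarith))
  · exact mul_nonneg (Real.sin_nonneg_of_nonneg_of_le_pi (by linarith) (by linarith))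
      (Real.sin_nonneg_of_nonneg_of_le_pi (by linarith) (by linarith))

lemma cos_sub_midpoint_lt (hα : α ∈ Set.Ico φ (φ + 2 * π)) (hβ : β ∈ Set.Ico φ (φ + 2 * π))
    (hγ : γ ∈ Set.Ico φ (φ + 2 * π)) (hout : γ < α ∧ γ < β ∨ α < γ ∧ β < γ) :
    Real.cos (γ - (α + β) / 2) < Real.cos ((β - α) / 2) := by
  rw [← sub_pos, cos_half_sub_cos_sub_midpoint]
  obtain ⟨⟨_, _⟩, ⟨_, _⟩, ⟨_, _⟩⟩ := And.intro hα (And.intro hβ hγ)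
  refine mul_pos zero_lt_two ?_
  rcases hout with ⟨h₁, h₂⟩ | ⟨h₁, h₂⟩
  · exact mul_pos_of_neg_of_neg (Real.sin_neg_of_neg_of_neg_pi_lt (by linarith) (by linarith))
      (Real.sin_neg_of_neg_of_neg_pi_lt (by linarith) (by linarith))
  · exact mul_pos (Real.sin_pos_of_pos_of_lt_pi (by linarith) (by linarith))
      (Real.sin_pos_of_pos_of_lt_pi (by linarith) (by linarith))

lemma directionForm_midpoint_left :
    directionForm ((α + β) / 2) (circlePoint c R α) =
      directionForm ((α + β) / 2) c + R * Real.cos ((β - α) / 2) := by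
  rw [directionForm_circlePoint, ← Real.cos_neg]
  ring_nf

lemma directionForm_midpoint_right :
    directionForm ((α + β) / 2) (circlePoint c R β) =
      directionForm ((α + β) / 2) c + R * Real.cos ((β - α) / 2) := by
  rw [directionForm_circlePoint]
  ring_nf

lemma disjoint_chords_of_outside (hR : 0 < R) (hα : α ∈ Set.Ico φ (φ + 2 * π))
    (hβ : β ∈ Set.Ico φ (φ + 2 * π)) (hγ : γ ∈ Set.Ico φ (φ + 2 * π))
    (hδ : δ ∈ Set.Ico φ (φ + 2 * π)) (hαβ : α ≤ β) (hγδ : γ < δ) (hne : ¬ (α = γ ∧ β = δ))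
    (hγ' : γ ≤ α ∨ β ≤ γ) (hδ' : δ ≤ α ∨ β ≤ δ) :
    Disjoint (openSegment ℝ (circlePoint c R α) (circlePoint c R β))
      (openSegment ℝ (circlePoint c R γ) (circlePoint c R δ)) := by
  refine disjoint_openSegment_of_le_of_lt (directionForm ((α + β) / 2))
    directionForm_midpoint_left.ge directionForm_midpoint_right.ge ?_ ?_ ?_
  all_goals simp only [directionForm_circlePoint, add_le_add_iff_left, add_lt_add_iff_left,
    mul_le_mul_iff_right₀ hR, mul_lt_mul_iff_right₀ hR]
  · exact cos_sub_midpoint_le hα hβ hγ (by grind)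
  · exact cos_sub_midpoint_le hα hβ hδ (by grind)
  · have hstrict : (γ < α ∧ γ < β ∨ α < γ ∧ β < γ) ∨ (δ < α ∧ δ < β ∨ α < δ ∧ β < δ) := by grind
    exact hstrict.imp (cos_sub_midpoint_lt hα hβ hγ) (cos_sub_midpoint_lt hα hβ hδ)

lemma disjoint_chords (hR : 0 < R) (hα : α ∈ Set.Ico φ (φ + 2 * π))
    (hβ : β ∈ Set.Ico φ (φ + 2 * π)) (hγ : γ ∈ Set.Ico φ (φ + 2 * π))
    (hδ : δ ∈ Set.Ico φ (φ + 2 * π)) (hαβ : α < β) (hγδ : γ < δ) (hne : ¬ (α = γ ∧ β = δ))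
    (hcross : ¬ (α < γ ∧ γ < β ∧ β < δ)) (hcross' : ¬ (γ < α ∧ α < δ ∧ δ < β)) :
    Disjoint (openSegment ℝ (circlePoint c R α) (circlePoint c R β))
      (openSegment ℝ (circlePoint c R γ) (circlePoint c R δ)) := by
  by_cases hout : (γ ≤ α ∨ β ≤ γ) ∧ (δ ≤ α ∨ β ≤ δ)
  · exact disjoint_chords_of_outside hR hα hβ hγ hδ hαβ.le hγδ hne hout.1 hout.2
  · exact (disjoint_chords_of_outside hR hγ hδ hα hβ hγδ.le hαβ (by grind) (by grind)
      (by grind)).symm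

lemma disjoint_chord_radius (hR : 0 < R) (hα : α ∈ Set.Ico φ (φ + 2 * π))
    (hβ : β ∈ Set.Ico φ (φ + 2 * π)) (hγ : γ ∈ Set.Ico φ (φ + 2 * π)) (hαβ : α < β)
    (hlen : β - α < π) (hγ' : γ ≤ α ∨ β ≤ γ) :
    Disjoint (openSegment ℝ (circlePoint c R α) (circlePoint c R β))
      (openSegment ℝ (circlePoint c R γ) c) := by
  have hcentre : 0 < R * Real.cos ((β - α) / 2) :=
    mul_pos hR (Real.cos_pos_of_mem_Ioo ⟨by linarith, by linarith⟩)
  refine disjoint_openSegment_of_le_of_lt (directionForm ((α + β) / 2))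
    directionForm_midpoint_left.ge directionForm_midpoint_right.ge ?_
    (by linarith) (.inr (by linarith))
  rw [directionForm_circlePoint, add_le_add_iff_left, mul_le_mul_iff_right₀ hR]
  exact cos_sub_midpoint_le hα hβ hγ (by grind)

lemma disjoint_radii (hR : 0 < R) (hα : α ∈ Set.Ico φ (φ + 2 * π))
    (hγ : γ ∈ Set.Ico φ (φ + 2 * π)) (hne : α ≠ γ) :
    Disjoint (openSegment ℝ (circlePoint c R α) c) (openSegment ℝ (circlePoint c R γ) c) := by
  wlog hlt : γ < α generalizing α γ
  · exact (this hγ hα hne.symm (hne.lt_of_le (not_lt.1 hlt))).symm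
  have hsin : 0 < R * Real.sin ((α - γ) / 2) :=
    mul_pos hR (Real.sin_pos_of_pos_of_lt_pi (by linarith) (by linarith [hα.2, hγ.1]))
  refine disjoint_openSegment_of_le_of_lt (directionForm ((α + γ) / 2 + π / 2)) ?_ le_rfl ?_ le_rfl
    (.inl ?_)
  · rw [directionForm_circlePoint, ← sub_sub, Real.cos_sub_pi_div_two,
      show α - (α + γ) / 2 = (α - γ) / 2 by ring]
    linarith
  all_goals
    rw [directionForm_circlePoint, ← sub_sub, Real.cos_sub_pi_div_two,
      show γ - (α + γ) / 2 = -((α - γ) / 2) by ring, Real.sin_neg]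
    linarith

end Geometry

/-! ### Plane drawings in the wheel -/

/-- Labels of the points of a wheel with `2d + 1` circle points: these are numbered from `0` to `2d`
in cyclic order, the point with index `0` getting the label `s`, and the centre has the label
`2d + 1`. -/
def wheelLabel (d s : ℕ) : WV (d + 1) → ℕ
  | none => 2 * d + 1
  | some i => if i + s ≤ 2 * d then i + s else i + s - (2 * d + 1)

/-- The angle of the `k`-th of `2d + 1` regularly spaced points on a circle, starting at `φ`. -/
noncomputable def labelAngle (d : ℕ) (φ : ℝ) (k : ℕ) : ℝ := φ + 2 * π * k / (2 * d + 1)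

/-- A graph on the labels `0, …, 2d + 1` (circle points in cyclic order, then the centre) whose
straight-line drawing in the wheel is plane. Chords must have length at most `d`, so that the centre
lies on the far side of them. -/
structure IsWheelPlane (d : ℕ) (H : SimpleGraph ℕ) : Prop where
  le_add_of_adj : ∀ {a b}, H.Adj a b → a < b → b ≤ 2 * d → b ≤ a + d
  not_interleaved : ∀ {a b p q}, H.Adj a b → H.Adj p q → a < p → p < b → b < q → ¬ q ≤ 2 * d
  not_under_chord : ∀ {a b k}, H.Adj a b → H.Adj k (2 * d + 1) → a < k → k < b → ¬ b ≤ 2 * d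

section Labels

variable {d s : ℕ}

lemma wheelLabel_some_le (hs : s ≤ 2 * d + 1) (i : Fin (2 * (d + 1) - 1)) :
    wheelLabel d s (some i) ≤ 2 * d := by
  simp only [wheelLabel]
  grind

lemma wheelLabel_le (hs : s ≤ 2 * d + 1) : ∀ a, wheelLabel d s a ≤ 2 * d + 1
  | none => le_rfl
  | some i => (wheelLabel_some_le hs i).trans (Nat.le_succ _)

lemma wheelLabel_injective (hs : s ≤ 2 * d + 1) : Function.Injective (wheelLabel d s) := by
  rintro (_ | i) (_ | j) h
  · rfl
  · exact absurd h (Nat.lt_succ_of_le (wheelLabel_some_le hs j)).ne'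
  · exact absurd h (Nat.lt_succ_of_le (wheelLabel_some_le hs i)).ne
  · simp only [wheelLabel] at h
    grind

lemma range_wheelLabel (hs : s ≤ 2 * d + 1) :
    Set.range (wheelLabel d s) = Set.Iic (2 * d + 1) := by
  refine Set.Subset.antisymm (Set.range_subset_iff.2 (wheelLabel_le hs)) fun k hk => ?_
  rcases (Set.mem_Iic.1 hk).eq_or_lt with rfl | hk
  · exact ⟨none, rfl⟩
  · refine ⟨some ⟨if s ≤ k then k - s else k + (2 * d + 1) - s, by grind⟩, ?_⟩
    simp only [wheelLabel]
    grind

end Labels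

section Drawing

variable {d s : ℕ} {c : ℝ × ℝ} {R θ φ : ℝ}

lemma labelAngle_strictMono : StrictMono (labelAngle d φ) := fun a b hab => by
  have hab' : (a : ℝ) < b := by exact_mod_cast hab
  unfold labelAngle
  gcongr

lemma labelAngle_mem_Ico {k : ℕ} (hk : k ≤ 2 * d) :
    labelAngle d φ k ∈ Set.Ico φ (φ + 2 * π) := by
  have hk' : (k : ℝ) < 2 * d + 1 := by exact_mod_cast Nat.lt_succ_of_le hk
  refine ⟨le_add_of_nonneg_right (by positivity), ?_⟩
  rw [labelAngle, add_lt_add_iff_left, div_lt_iff₀ (by positivity)]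
  gcongr

lemma labelAngle_sub_lt_pi {a b : ℕ} (hab : b ≤ a + d) :
    labelAngle d φ b - labelAngle d φ a < π := by
  have hab' : (b : ℝ) ≤ a + d := by exact_mod_cast hab
  rw [labelAngle, labelAngle, add_sub_add_left_eq_sub, ← sub_div, div_lt_iff₀ (by positivity)]
  nlinarith [Real.pi_pos]

lemma wpos_some_eq_circlePoint (i : Fin (2 * (d + 1) - 1)) :
    wpos (d + 1) c R θ (some i) =
      circlePoint c R (labelAngle d (θ - 2 * π * s / (2 * d + 1)) (wheelLabel d s (some i))) := by
  have hangle : θ + 2 * π * i / (2 * ((d + 1 : ℕ) : ℝ) - 1) =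
      labelAngle d (θ - 2 * π * s / (2 * d + 1)) (i + s) := by
    rw [labelAngle, show 2 * ((d + 1 : ℕ) : ℝ) - 1 = 2 * d + 1 by push_cast; ring]
    push_cast
    ring
  simp only [wpos, circlePoint, wheelLabel, hangle]
  split_ifs with h
  · rfl
  · have hperiod : labelAngle d (θ - 2 * π * s / (2 * d + 1)) (i + s) =
        labelAngle d (θ - 2 * π * s / (2 * d + 1)) (i + s - (2 * d + 1)) + 2 * π := by
      rw [labelAngle, labelAngle, Nat.cast_sub (by lia)]
      push_cast
      field_simp
      ring
    rw [hperiod, Real.cos_add_two_pi, Real.sin_add_two_pi]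

lemma nonCrossing_of_forall_lt {n : ℕ} {pos : WV n → ℝ × ℝ} {T : SimpleGraph (WV n)}
    {f : WV n → ℕ} (hf : Function.Injective f)
    (h : ∀ a b p q, T.Adj a b → T.Adj p q → f a < f b → f p < f q → ¬ (a = p ∧ b = q) →
      Disjoint (openSegment ℝ (pos a) (pos b)) (openSegment ℝ (pos p) (pos q))) :
    NonCrossing pos T := by
  intro a b p q hab hpq hne
  wlog hlt : f a < f b generalizing a b
  · rw [openSegment_symm]
    exact this b a hab.symm (by rwa [Sym2.eq_swap])
      ((hf.ne hab.ne').lt_of_le (not_lt.1 hlt))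
  wlog hlt' : f p < f q generalizing p q
  · rw [openSegment_symm ℝ (pos p)]
    exact this q p hpq.symm (by rwa [Sym2.eq_swap (a := q)])
      ((hf.ne hpq.ne').lt_of_le (not_lt.1 hlt'))
  exact h a b p q hab hpq hlt hlt' fun ⟨hap, hbq⟩ => hne (by rw [hap, hbq])

lemma IsWheelPlane.nonCrossing {H : SimpleGraph ℕ} (hH : IsWheelPlane d H) (hR : 0 < R)
    (hs : s ≤ 2 * d + 1) :
    NonCrossing (wpos (d + 1) c R θ) (H.comap (wheelLabel d s)) := by
  refine nonCrossing_of_forall_lt (wheelLabel_injective hs) fun a b p q hab hpq hlt hlt' hne => ?_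
  rw [SimpleGraph.comap_adj] at hab hpq
  obtain _ | i := a
  · exact absurd hlt (wheelLabel_le hs b).not_gt
  obtain _ | k := p
  · exact absurd hlt' (wheelLabel_le hs q).not_gt
  have hle := wheelLabel_some_le hs
  have hmem := fun i => labelAngle_mem_Ico (φ := θ - 2 * π * s / (2 * d + 1)) (hle i)
  have hmono := labelAngle_strictMono (d := d) (φ := θ - 2 * π * s / (2 * d + 1))
  have hout : ∀ {i j k}, H.Adj (wheelLabel d s (some i)) (wheelLabel d s (some j)) →
      H.Adj (wheelLabel d s (some k)) (2 * d + 1) →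
      wheelLabel d s (some k) ≤ wheelLabel d s (some i) ∨
        wheelLabel d s (some j) ≤ wheelLabel d s (some k) := fun hij hk =>
    or_iff_not_imp_left.2 fun h => not_lt.1 fun h' =>
      hH.not_under_chord hij hk (not_le.1 h) h' (hle _)
  obtain _ | j := b <;> obtain _ | l := q <;> simp only [wpos_some_eq_circlePoint (s := s)]
  · exact disjoint_radii hR (hmem i) (hmem k) (hmono.injective.ne fun h =>
      hne ⟨wheelLabel_injective hs h, rfl⟩)
  · exact (disjoint_chord_radius hR (hmem k) (hmem l) (hmem i) (hmono hlt')
      (labelAngle_sub_lt_pi (hH.le_add_of_adj hpq hlt' (hle l)))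
      ((hout hpq hab).imp (hmono.monotone ·) (hmono.monotone ·))).symm
  · exact disjoint_chord_radius hR (hmem i) (hmem j) (hmem k) (hmono hlt)
      (labelAngle_sub_lt_pi (hH.le_add_of_adj hab hlt (hle j)))
      ((hout hab hpq).imp (hmono.monotone ·) (hmono.monotone ·))
  · refine disjoint_chords hR (hmem i) (hmem j) (hmem k) (hmem l) (hmono hlt) (hmono hlt')
      (fun ⟨h, h'⟩ => hne ⟨wheelLabel_injective hs (hmono.injective h),
        wheelLabel_injective hs (hmono.injective h')⟩) ?_ ?_
    · simp only [hmono.lt_iff_lt]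
      exact fun ⟨h₁, h₂, h₃⟩ => hH.not_interleaved hab hpq h₁ h₂ h₃ (hle l)
    · simp only [hmono.lt_iff_lt]
      exact fun ⟨h₁, h₂, h₃⟩ => hH.not_interleaved hpq hab h₁ h₂ h₃ (hle j)

end Drawing

/-! ### Caterpillars -/

/-- No vertex has three neighbours which are not leaves. Finite caterpillars have this property
(`noTripleBranch_of_isCaterpillar`), and unlike being a caterpillar it passes to subgraphs. -/
def NoTripleBranch {V : Type*} (G : SimpleGraph V) : Prop :=
  ∀ ⦃v a b c a' b' c'⦄, G.Adj v a → G.Adj v b → G.Adj v c → a ≠ b → a ≠ c → b ≠ c →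
    G.Adj a a' → G.Adj b b' → G.Adj c c' → ¬ (a' ≠ v ∧ b' ≠ v ∧ c' ≠ v)

/-- `RootedCaterpillar G S r` says that `G` restricted to `S` is a caterpillar built from one vertex
by repeatedly attaching a new vertex to the root and possibly moving the root there; `r` is the
final root, that is, an end of the spine or a neighbour of one. -/
inductive RootedCaterpillar {V : Type*} (G : SimpleGraph V) : Set V → V → Prop
  | single (r : V) : RootedCaterpillar G {r} r
  | attach {S : Set V} {r x r' : V} (hS : RootedCaterpillar G S r) (hx : x ∉ S) (hrx : G.Adj r x)
      (hleaf : ∀ a ∈ S, G.Adj a x → a = r) (hr' : r' = r ∨ r' = x) :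
      RootedCaterpillar G (insert x S) r'

/-- Every vertex of `S` is connected to `r` within `S`, expressed by closed sets of vertices. -/
def ConnectedFrom {V : Type*} (G : SimpleGraph V) (S : Set V) (r : V) : Prop :=
  ∀ U : Set V, r ∈ U → (∀ a ∈ U, ∀ b ∈ S, G.Adj a b → b ∈ U) → S ⊆ U

/-- The vertex `r` has a neighbour outside `S` which is not a leaf; in a graph satisfying
`NoTripleBranch`, at most one neighbour of `r` in `S` is then not a leaf. -/
def HasOuterBranch {V : Type*} (G : SimpleGraph V) (S : Set V) (r : V) : Prop :=
  ∃ p ∉ S, G.Adj r p ∧ ∃ p' ≠ r, G.Adj p p'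

section Caterpillar

variable {V W : Type*} {G H : SimpleGraph V} {S : Set V} {r v w : V}

lemma NoTripleBranch.mono (hG : NoTripleBranch G) (hle : H ≤ G) : NoTripleBranch H :=
  fun _ _ _ _ _ _ _ hva hvb hvc hab hac hbc ha hb hc =>
    hG (hle hva) (hle hvb) (hle hvc) hab hac hbc (hle ha) (hle hb) (hle hc)

lemma NoTripleBranch.deleteIncidenceSet_of_induce {u : V}
    (hG : NoTripleBranch (G.induce {v | v ≠ u})) : NoTripleBranch (G.deleteIncidenceSet u) := by
  intro v a b c a' b' c'
  simp only [SimpleGraph.deleteIncidenceSet_adj]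
  rintro ⟨hva, hv, ha⟩ ⟨hvb, -, hb⟩ ⟨hvc, -, hc⟩ hab hac hbc ⟨haa, -, ha'⟩ ⟨hbb, -, hb'⟩
    ⟨hcc, -, hc'⟩
  have := @hG ⟨v, hv⟩ ⟨a, ha⟩ ⟨b, hb⟩ ⟨c, hc⟩ ⟨a', ha'⟩ ⟨b', hb'⟩ ⟨c', hc'⟩ hva hvb hvc
  simp only [ne_eq, Subtype.mk.injEq] at this
  exact this hab hac hbc haa hbb hcc

lemma two_le_gdeg [Finite V] {a b : V} (ha : G.Adj v a) (hb : G.Adj v b) (hab : a ≠ b) :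
    2 ≤ gdeg G v :=
  (Set.one_lt_ncard (Set.toFinite _)).2 ⟨a, ha, b, hb, hab⟩

lemma noTripleBranch_of_isCaterpillar [Finite V] (hG : IsCaterpillar G) : NoTripleBranch G := by
  classical
  obtain ⟨htree, u, w, p, hp, hdeg⟩ := hG
  intro v a b c a' b' c' hva hvb hvc hab hac hbc haa hbb hcc ⟨ha, hb, hc⟩
  have hv : v ∈ p.support := hdeg v (two_le_gdeg hva hvb hab)
  have hnext : ∀ x x', G.Adj v x → G.Adj x x' → x' ≠ v →
      x = (p.takeUntil v hv).penultimate ∨ x = (p.dropUntil v hv).snd := by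
    intro x x' hvx hxx hx'
    have hx : x ∈ p.support := hdeg x (two_le_gdeg hxx hvx.symm hx')
    rw [← p.take_spec hv, SimpleGraph.Walk.mem_support_append_iff] at hx
    exact hx.imp (htree.isAcyclic.eq_penultimate_of_adj_end (hp.takeUntil hv) hvx)
      (htree.isAcyclic.eq_snd_of_adj_start (hp.dropUntil hv) hvx)
  have := hnext a a' hva haa ha
  have := hnext b b' hvb hbb hb
  have := hnext c c' hvc hcc hc
  grind

namespace RootedCaterpillar

lemma root_mem (h : RootedCaterpillar G S r) : r ∈ S := by
  induction h with
  | single r => exact Set.mem_singleton r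
  | attach _ _ _ _ hr' ih =>
    rcases hr' with rfl | rfl
    · exact Set.mem_insert_of_mem _ ih
    · exact Set.mem_insert _ _

lemma congr (h : RootedCaterpillar G S r) (hGH : ∀ a ∈ S, ∀ b ∈ S, G.Adj a b ↔ H.Adj a b) :
    RootedCaterpillar H S r := by
  induction h with
  | single r => exact .single r
  | @attach S r x _ hS hx hrx hleaf hr' ih =>
    have hxS := Set.mem_insert x S
    refine (ih fun a ha b hb => hGH a (.inr ha) b (.inr hb)).attach hx
      ((hGH r (.inr hS.root_mem) x hxS).1 hrx) (fun a ha hax => ?_) hr'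
    exact hleaf a ha ((hGH a (.inr ha) x hxS).2 hax)

lemma comap (h : RootedCaterpillar G S r) {f : W → V} (hf : Function.Injective f)
    (hS : S ⊆ Set.range f) : ∃ r', f r' = r ∧ RootedCaterpillar (G.comap f) (f ⁻¹' S) r' := by
  induction h with
  | single r =>
    obtain ⟨r', rfl⟩ := hS (Set.mem_singleton r)
    refine ⟨r', rfl, ?_⟩
    rw [← Set.image_singleton, Set.preimage_image_eq _ hf]
    exact .single r'
  | @attach S r x s hS' hx hrx hleaf hs ih =>
    obtain ⟨hxf, hSf⟩ := Set.insert_subset_iff.1 hS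
    obtain ⟨r', rfl, h'⟩ := ih hSf
    obtain ⟨x', rfl⟩ := hxf
    have hpre : f ⁻¹' insert (f x') S = insert x' (f ⁻¹' S) := by
      ext y
      simp [hf.eq_iff]
    rw [hpre]
    obtain ⟨s', rfl⟩ : s ∈ Set.range f := by rcases hs with rfl | rfl <;> exact ⟨_, rfl⟩
    exact ⟨s', rfl, h'.attach hx hrx (fun a ha hax => hf (hleaf _ ha hax))
      (hs.imp (hf ·) (hf ·))⟩

lemma not_isCycle (h : RootedCaterpillar G S r) {u : V} (p : G.Walk u u)
    (hp : ∀ w ∈ p.support, w ∈ S) : ¬ p.IsCycle := by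
  classical
  induction h generalizing u with
  | single r =>
    intro hc
    have hsnd := hp _ (p.getVert_mem_support 1)
    exact (p.adj_snd hc.not_nil).ne ((hp _ p.start_mem_support).trans hsnd.symm)
  | @attach S r x _ _ _ _ hleaf _ ih =>
    intro hc
    by_cases hx : x ∈ p.support
    · have hc' := hc.rotate hx
      have heq : ∀ a ∈ (p.rotate x hx).support, G.Adj a x → a = r := fun a ha hax =>
        hleaf a (((hp a ((p.mem_support_rotate_iff x hx).1 ha)).resolve_left hax.ne)) hax
      have hsnd := heq _ (SimpleGraph.Walk.getVert_mem_support _ 1)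
        (SimpleGraph.Walk.adj_snd hc'.not_nil).symm
      have hpen := heq _ (SimpleGraph.Walk.getVert_mem_support _ _)
        (SimpleGraph.Walk.adj_penultimate hc'.not_nil)
      exact hc'.snd_ne_penultimate (hsnd.trans hpen.symm)
    · exact ih p (fun w hw => (hp w hw).resolve_left (ne_of_mem_of_not_mem hw hx)) hc

lemma reachable (h : RootedCaterpillar G S r) : ∀ a ∈ S, G.Reachable r a := by
  induction h with
  | single r => rintro _ rfl; rfl
  | attach _ _ hrx _ hr' ih =>
    rintro a (rfl | ha) <;> rcases hr' with rfl | rfl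
    · exact hrx.reachable
    · rfl
    · exact ih a ha
    · exact hrx.symm.reachable.trans (ih a ha)

lemma exists_isPath (h : RootedCaterpillar G S r) :
    ∃ (v : V) (p : G.Walk r v), p.IsPath ∧ (∀ w ∈ p.support, w ∈ S) ∧
      ∀ w ∈ S, ∀ a ∈ S, ∀ b ∈ S, G.Adj w a → G.Adj w b → a ≠ b → w ∈ p.support := by
  induction h with
  | single r =>
    exact ⟨r, .nil, .nil, by simp, fun w hw _ _ _ _ _ _ _ => by simpa using hw⟩
  | @attach S r x _ _ hx hrx hleaf hr' ih =>
    obtain ⟨v, p, hp, hpS, hcover⟩ := ih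
    have hcover' : ∀ w ∈ insert x S, ∀ a ∈ insert x S, ∀ b ∈ insert x S,
        G.Adj w a → G.Adj w b → a ≠ b → w ∈ p.support := by
      intro w hw a ha b hb hwa hwb hab
      have hr := p.start_mem_support
      have := hwa.symm
      have := hwb.symm
      grind [SimpleGraph.irrefl]
    rcases hr' with rfl | rfl
    · exact ⟨v, p, hp, fun w hw => .inr (hpS w hw), hcover'⟩
    · refine ⟨v, .cons hrx.symm p, hp.cons fun hx' => hx (hpS _ hx'), ?_, ?_⟩
      · simp only [SimpleGraph.Walk.support_cons, List.mem_cons]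
        exact fun w => Or.imp id (hpS w)
      · exact fun w hw a ha b hb hwa hwb hab => .tail _ (hcover' w hw a ha b hb hwa hwb hab)

lemma isCaterpillar (h : RootedCaterpillar G Set.univ r) : IsCaterpillar G := by
  obtain ⟨v, p, hp, -, hcover⟩ := h.exists_isPath
  have hreach := fun a => h.reachable a (Set.mem_univ a)
  have : Nonempty V := ⟨r⟩
  refine ⟨⟨⟨fun a b => (hreach a).symm.trans (hreach b)⟩,
    fun u q => h.not_isCycle q fun _ _ => Set.mem_univ _⟩, r, v, p, hp, fun w hw => ?_⟩
  have hfin : (G.neighborSet w).Finite := Set.finite_of_ncard_pos (zero_lt_two.trans_le hw)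
  obtain ⟨a, ha, b, hb, hab⟩ := (Set.one_lt_ncard hfin).1 hw
  exact hcover w (Set.mem_univ w) a (Set.mem_univ a) b (Set.mem_univ b) ha hb hab

end RootedCaterpillar

lemma ConnectedFrom.sdiff_singleton (h : ConnectedFrom G S r)
    (hleaf : ∀ a ∈ S, G.Adj v a → a = w) (hr : r = w ∨ r = v) :
    ConnectedFrom G (S \ {v}) w := by
  intro U hw hU
  have hclosed : S ⊆ insert v U := by
    refine h _ (hr.elim (fun h => .inr (h ▸ hw)) .inl) fun a ha b hb hab => ?_
    rcases ha with rfl | ha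
    · exact .inr (hleaf b hb hab ▸ hw)
    · exact or_iff_not_imp_left.2 fun hbv => hU a ha b ⟨hb, hbv⟩ hab
  exact fun a ha => (hclosed ha.1).resolve_left ha.2

lemma exists_pendant (hG : NoTripleBranch G) (hr : r ∈ S) (hconn : ConnectedFrom G S r)
    (hout : HasOuterBranch G S r) (hS : S ≠ {r}) :
    ∃ v ∈ S, ∃ w ∈ S, G.Adj w v ∧ (∀ a ∈ S, G.Adj v a → a = w) ∧ (r = w ∨ r = v) ∧
      HasOuterBranch G (S \ {v}) w := by
  obtain ⟨p, hpS, hrp, p', hp', hpp⟩ := hout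
  obtain ⟨y, hy, hry⟩ : ∃ y ∈ S, G.Adj r y := by
    by_contra! hnone
    refine hS (Set.Subset.antisymm (hconn {r} rfl ?_) (Set.singleton_subset_iff.2 hr))
    rintro _ rfl b hb hab
    exact absurd hab (hnone b hb)
  by_cases huniq : ∀ z ∈ S, G.Adj r z → z = y
  · exact ⟨r, hr, y, hy, hry.symm, huniq, .inr rfl, r, by simp, hry.symm, p,
      (ne_of_mem_of_not_mem hy hpS).symm, hrp⟩
  · push Not at huniq
    obtain ⟨z, hz, hrz, hzy⟩ := huniq
    obtain ⟨x, hx, hrx, hleaf⟩ : ∃ x ∈ S, G.Adj r x ∧ ∀ a, G.Adj x a → a = r := by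
      by_contra! hbranch
      obtain ⟨y', hyy, hy'⟩ := hbranch y hy hry
      obtain ⟨z', hzz, hz'⟩ := hbranch z hz hrz
      exact hG hrp hry hrz (ne_of_mem_of_not_mem hy hpS).symm (ne_of_mem_of_not_mem hz hpS).symm
        hzy.symm hpp hyy hzz ⟨hp', hy', hz'⟩
    exact ⟨x, hx, r, hr, hrx, fun a _ => hleaf a, .inl rfl, p, fun h => hpS h.1, hrp, p', hp', hpp⟩

theorem NoTripleBranch.rootedCaterpillar (hG : NoTripleBranch G) (hfin : S.Finite) (hr : r ∈ S)
    (hconn : ConnectedFrom G S r) (hout : HasOuterBranch G S r) : RootedCaterpillar G S r := by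
  induction hk : S.ncard using Nat.strong_induction_on generalizing S r with
  | _ k ih =>
    by_cases hS : S = {r}
    · exact hS ▸ .single r
    obtain ⟨v, hv, w, hw, hwv, hleaf, hr', hout'⟩ := exists_pendant hG hr hconn hout hS
    have hcore : RootedCaterpillar G (S \ {v}) w :=
      ih _ (hk ▸ Set.ncard_sdiff_singleton_lt_of_mem hv hfin) (hfin.subset Set.sdiff_subset)
        ⟨hw, hwv.ne⟩ (hconn.sdiff_singleton hleaf hr') hout' rfl
    have := hcore.attach (by simp) hwv (fun a ha hav => hleaf a ha.1 hav.symm) hr'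
    rwa [Set.insert_sdiff_self_of_mem hv] at this

end Caterpillar

/-! ### Zigzags -/

/-- The left ends `x e` of nested intervals `[x e, x e + e]`, each obtained from the previous one by
adding a point on one side, and ending with `[0, d]`. -/
structure IsZigzag (d : ℕ) (x : ℕ → ℕ) : Prop where
  last : x d = 0
  step : ∀ e < d, x e = x (e + 1) ∨ x e = x (e + 1) + 1

/-- The graph on `ℕ` with one edge of each length `e = 1, …, d`, namely from `x e` to `x e + e`. -/
def zigzagGraph (x : ℕ → ℕ) (d : ℕ) : SimpleGraph ℕ where
  Adj a b := ∃ e, 1 ≤ e ∧ e ≤ d ∧ (a = x e ∧ b = x e + e ∨ a = x e + e ∧ b = x e)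
  symm := ⟨fun _ _ ⟨e, h₁, hd, h⟩ => ⟨e, h₁, hd, h.symm.imp And.symm And.symm⟩⟩
  loopless := ⟨fun _ ⟨_, _, _, _⟩ => by lia⟩

/-- An isomorphism `f` from `G` restricted to `S` to the zigzag with left ends `x`, a plane
realisation of a caterpillar in which every edge length occurs once (a graceful labelling). -/
structure IsZigzagLabelling {V : Type*} (G : SimpleGraph V) (S : Set V) (d : ℕ) (x : ℕ → ℕ)
    (f : V → ℕ) : Prop where
  isZigzag : IsZigzag d x
  bijOn : Set.BijOn f S (Set.Iic d)
  adj_iff : ∀ ⦃a⦄, a ∈ S → ∀ ⦃b⦄, b ∈ S → (G.Adj a b ↔ (zigzagGraph x d).Adj (f a) (f b))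

section Zigzag

variable {d e e' : ℕ} {x : ℕ → ℕ}

lemma zigzagGraph_adj {a b : ℕ} : (zigzagGraph x d).Adj a b ↔
    ∃ e, 1 ≤ e ∧ e ≤ d ∧ (a = x e ∧ b = x e + e ∨ a = x e + e ∧ b = x e) :=
  Iff.rfl

namespace IsZigzag

lemma nested (hx : IsZigzag d x) (hee : e ≤ e') (he' : e' ≤ d) :
    x e' ≤ x e ∧ x e + e ≤ x e' + e' := by
  induction e', hee using Nat.le_induction with
  | base => exact ⟨le_rfl, le_rfl⟩
  | succ k _ ih =>
    have := ih (by lia)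
    have := hx.step k (by lia)
    lia

lemma add_le (hx : IsZigzag d x) (he : e ≤ d) : x e + e ≤ d := by
  have := (hx.nested he le_rfl).2
  rwa [hx.last, zero_add] at this

lemma succ (hx : IsZigzag d x) : IsZigzag (d + 1) (Function.update x (d + 1) 0) where
  last := Function.update_self ..
  step e he := by
    have := hx.last
    have := hx.step e
    grind

lemma reflect (hx : IsZigzag d x) : IsZigzag d fun e => d - (x e + e) where
  last := by simp
  step e he := by
    have := hx.step e he
    have := hx.add_le he
    lia

lemma adj_le (hx : IsZigzag d x) {a b : ℕ} (h : (zigzagGraph x d).Adj a b) : a ≤ d ∧ b ≤ d := by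
  obtain ⟨e, -, he, h⟩ := h
  have := hx.add_le he
  lia

lemma adj_reflect (hx : IsZigzag d x) {a b : ℕ} (ha : a ≤ d) (hb : b ≤ d) :
    (zigzagGraph (fun e => d - (x e + e)) d).Adj (d - a) (d - b) ↔ (zigzagGraph x d).Adj a b := by
  simp only [zigzagGraph_adj]
  refine exists_congr fun e => and_congr_right fun _ => and_congr_right fun he => ?_
  have := hx.add_le he
  lia

lemma eq_of_adj_of_notMem (hx : IsZigzag d x) (he : e < d) {a b : ℕ}
    (ha : a ∈ Set.Icc (x e) (x e + e)) (hb : b ∈ Set.Icc (x (e + 1)) (x (e + 1) + (e + 1)))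
    (hb' : b ∉ Set.Icc (x e) (x e + e)) (hab : (zigzagGraph x d).Adj a b) :
    a = x (e + 1) ∧ b = x (e + 1) + (e + 1) ∨ a = x (e + 1) + (e + 1) ∧ b = x (e + 1) := by
  obtain ⟨k, -, hkd, hk⟩ := hab
  simp only [Set.mem_Icc] at ha hb hb'
  have := hx.step e he
  rcases lt_trichotomy k (e + 1) with hke | rfl | hke
  · have := hx.nested (Nat.le_of_lt_succ hke) he.le
    lia
  · exact hk
  · have := hx.nested hke.le hkd
    lia

lemma rootedCaterpillar (hx : IsZigzag d x) (he : e ≤ d) :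
    RootedCaterpillar (zigzagGraph x d) (Set.Icc (x e) (x e + e)) (x e) ∧
      RootedCaterpillar (zigzagGraph x d) (Set.Icc (x e) (x e + e)) (x e + e) := by
  induction e with
  | zero => simpa using RootedCaterpillar.single (x 0)
  | succ e ih =>
    obtain ⟨hleft, hright⟩ := ih (by lia)
    rcases hx.step e he with h | h
    · have hinsert : Set.Icc (x (e + 1)) (x (e + 1) + (e + 1)) =
          insert (x (e + 1) + (e + 1)) (Set.Icc (x e) (x e + e)) := by
        ext; simp only [Set.mem_Icc, Set.mem_insert_iff]; lia
      have hattach := fun r => hleft.attach (r' := r) (x := x (e + 1) + (e + 1)) (by simp [h])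
        ⟨e + 1, by lia, he, .inl ⟨h, rfl⟩⟩ fun a ha hav => by
          have := hx.eq_of_adj_of_notMem he ha (by simp) (by simp [h]) hav
          lia
      rw [hinsert]
      exact ⟨hattach _ (.inl h.symm), hattach _ (.inr rfl)⟩
    · have hinsert : Set.Icc (x (e + 1)) (x (e + 1) + (e + 1)) =
          insert (x (e + 1)) (Set.Icc (x e) (x e + e)) := by
        ext; simp only [Set.mem_Icc, Set.mem_insert_iff]; lia
      have hend : x (e + 1) + (e + 1) = x e + e := by lia
      have hattach := fun r => hright.attach (r' := r) (x := x (e + 1)) (by simp [h])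
        ⟨e + 1, by lia, he, .inr ⟨hend.symm, rfl⟩⟩ fun a ha hav => by
          have := hx.eq_of_adj_of_notMem he ha (by simp) (by simp [h]) hav
          lia
      rw [hinsert]
      exact ⟨hattach _ (.inr rfl), hattach _ (.inl hend)⟩

end IsZigzag

lemma zigzagGraph_succ_adj {a b k : ℕ} :
    (zigzagGraph (Function.update x (d + 1) k) (d + 1)).Adj a b ↔
      (zigzagGraph x d).Adj a b ∨ a = k ∧ b = k + (d + 1) ∨ a = k + (d + 1) ∧ b = k := by
  simp only [zigzagGraph_adj]
  constructor
  · rintro ⟨e, h₁, he, h⟩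
    rcases he.eq_or_lt with rfl | he
    · rw [Function.update_self] at h
      exact .inr h
    · rw [Function.update_of_ne he.ne] at h
      exact .inl ⟨e, h₁, Nat.le_of_lt_succ he, h⟩
  · rintro (⟨e, h₁, he, h⟩ | h)
    · refine ⟨e, h₁, he.trans d.le_succ, ?_⟩
      rwa [Function.update_of_ne (Nat.lt_succ_of_le he).ne]
    · refine ⟨d + 1, d.succ_pos, le_rfl, ?_⟩
      rwa [Function.update_self]

lemma zigzagGraph_add_adj {a b k : ℕ} : (zigzagGraph (fun e => x e + k) d).Adj a b ↔
    k ≤ a ∧ k ≤ b ∧ (zigzagGraph x d).Adj (a - k) (b - k) := by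
  simp only [zigzagGraph_adj]
  constructor
  · rintro ⟨e, h₁, he, h⟩
    exact ⟨by lia, by lia, e, h₁, he, by lia⟩
  · rintro ⟨ha, hb, e, h₁, he, h⟩
    exact ⟨e, h₁, he, by lia⟩

namespace IsZigzagLabelling

variable {V : Type*} {G : SimpleGraph V} {S : Set V} {f : V → ℕ} {r v : V}

lemma le (h : IsZigzagLabelling G S d x f) (hv : v ∈ S) : f v ≤ d := h.bijOn.mapsTo hv

lemma reflect (h : IsZigzagLabelling G S d x f) :
    IsZigzagLabelling G S d (fun e => d - (x e + e)) fun v => d - f v where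
  isZigzag := h.isZigzag.reflect
  bijOn := by
    have hsub : Set.BijOn (d - ·) (Set.Iic d) (Set.Iic d) :=
      ⟨fun k _ => d.sub_le k, fun k hk l hl hkl => by grind,
        fun k hk => ⟨d - k, d.sub_le k, Nat.sub_sub_self hk⟩⟩
    exact hsub.comp h.bijOn
  adj_iff a ha b hb := by
    rw [h.isZigzag.adj_reflect (h.le ha) (h.le hb), h.adj_iff ha hb]

lemma attach [DecidableEq V] (h : IsZigzagLabelling G S d x f) (hr : r ∈ S) (hr0 : f r = 0)
    (hv : v ∉ S) (hrv : G.Adj r v) (hleaf : ∀ a ∈ S, G.Adj a v → a = r) :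
    IsZigzagLabelling G (insert v S) (d + 1) (Function.update x (d + 1) 0)
      (Function.update f v (d + 1)) where
  isZigzag := h.isZigzag.succ
  bijOn := by
    have hEq : Set.EqOn f (Function.update f v (d + 1)) S := fun a ha =>
      (Function.update_of_ne (ne_of_mem_of_not_mem ha hv) _ _).symm
    have hIic : Set.Iic (d + 1) = insert (Function.update f v (d + 1) v) (Set.Iic d) := by
      ext k
      simp only [Function.update_self, Set.mem_Iic, Set.mem_insert_iff]
      lia
    rw [hIic]
    exact (h.bijOn.congr hEq).insert (by simp)
  adj_iff := by
    have hnew : ∀ a ∈ S, (G.Adj a v ↔ f a = 0) := fun a ha =>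
      ⟨fun hav => hleaf a ha hav ▸ hr0, fun ha0 => h.bijOn.injOn ha hr (ha0.trans hr0.symm) ▸ hrv⟩
    have hbound := @h.isZigzag.adj_le
    have hle := @h.le
    rintro a (rfl | ha) b (rfl | hb) <;> rw [zigzagGraph_succ_adj, zero_add]
    · simp
    · rw [Function.update_self, Function.update_of_ne (ne_of_mem_of_not_mem hb hv), G.adj_comm]
      grind
    · rw [Function.update_self, Function.update_of_ne (ne_of_mem_of_not_mem ha hv)]
      grind
    · rw [Function.update_of_ne (ne_of_mem_of_not_mem ha hv),
        Function.update_of_ne (ne_of_mem_of_not_mem hb hv), h.adj_iff ha hb]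
      grind

end IsZigzagLabelling

lemma RootedCaterpillar.exists_isZigzagLabelling {V : Type*} {G : SimpleGraph V} {S : Set V} {r : V}
    (h : RootedCaterpillar G S r) : ∃ d x f, IsZigzagLabelling G S d x f ∧ f r = 0 := by
  classical
  induction h with
  | single r =>
    refine ⟨0, fun _ => 0, fun _ => 0, ⟨⟨rfl, by simp⟩, ?_, ?_⟩, rfl⟩
    · rw [show Set.Iic 0 = {0} by ext; simp]
      simp
    · rintro a rfl b rfl
      simp
  | @attach S r v s hS hv hrv hleaf hs ih =>
    obtain ⟨d, x, f, h, hr0⟩ := ih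
    have hattach := h.attach hS.root_mem hr0 hv hrv hleaf
    rcases hs with rfl | rfl
    · exact ⟨_, _, _, hattach, by
        rwa [Function.update_of_ne (ne_of_mem_of_not_mem hS.root_mem hv)]⟩
    · exact ⟨_, _, _, hattach.reflect, by simp⟩

end Zigzag

/-! ### The trees of the partition -/

/-- The edges from the centre `2d + 1` to the labels in `s`. -/
def spokeGraph (d : ℕ) (s : Set ℕ) : SimpleGraph ℕ :=
  SimpleGraph.fromRel fun a b => a = 2 * d + 1 ∧ b ∈ s

/-- The tree whose rotations are the first `d` trees of the partition: a zigzag on `0, …, d`, its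
translate on `d, …, 2d`, and one radial edge. -/
def baseTree (d : ℕ) (x : ℕ → ℕ) (ρ : ℕ) : SimpleGraph ℕ :=
  zigzagGraph x d ⊔ zigzagGraph (fun e => x e + d) d ⊔ spokeGraph d {ρ}

/-- The edges missed by `d` consecutive rotations of `baseTree d x ρ`, where `ρ` is `0` or `2d`: one
chord of each length, and the radial edges to `d + 1, …, 2d` and to `0` or `d`, respectively (which
is `ρ / 2` in both cases). -/
def leftoverTree (d : ℕ) (x : ℕ → ℕ) (ρ : ℕ) : SimpleGraph ℕ :=
  zigzagGraph x d ⊔ spokeGraph d (insert (ρ / 2) (Set.Ioc d (2 * d)))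

section Trees

variable {d e a b k ρ : ℕ} {x : ℕ → ℕ}

lemma spokeGraph_adj {s : Set ℕ} : (spokeGraph d s).Adj a b ↔
    a ≠ b ∧ (a = 2 * d + 1 ∧ b ∈ s ∨ b = 2 * d + 1 ∧ a ∈ s) := by
  rw [spokeGraph, SimpleGraph.fromRel_adj]

lemma zigzagGraph_adj_of_lt (hab : a < b) :
    (zigzagGraph x d).Adj a b ↔ b ≤ a + d ∧ a = x (b - a) := by
  rw [zigzagGraph_adj]
  constructor
  · rintro ⟨e, -, hed, ⟨rfl, rfl⟩ | ⟨rfl, rfl⟩⟩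
    · simpa using hed
    · lia
  · rintro ⟨hd, hx⟩
    exact ⟨b - a, by lia, by lia, by lia⟩

lemma baseTree_adj_of_lt (hab : a < b) (hb : b ≤ 2 * d) :
    (baseTree d x ρ).Adj a b ↔ b ≤ a + d ∧ (a = x (b - a) ∨ a = x (b - a) + d) := by
  simp only [baseTree, SimpleGraph.sup_adj, zigzagGraph_adj_of_lt hab, spokeGraph_adj]
  lia

lemma leftoverTree_adj_of_lt (hab : a < b) (hb : b ≤ 2 * d) :
    (leftoverTree d x ρ).Adj a b ↔ b ≤ a + d ∧ a = x (b - a) := by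
  simp only [leftoverTree, SimpleGraph.sup_adj, zigzagGraph_adj_of_lt hab, spokeGraph_adj]
  lia

namespace IsZigzag

lemma baseTree_adj_centre (hx : IsZigzag d x) (hk : k ≤ 2 * d) :
    (baseTree d x ρ).Adj k (2 * d + 1) ↔ k = ρ := by
  have := hx.add_le (e := 2 * d + 1 - k)
  simp only [baseTree, SimpleGraph.sup_adj, zigzagGraph_adj_of_lt (Nat.lt_succ_of_le hk),
    spokeGraph_adj, Set.mem_singleton_iff]
  lia

lemma leftoverTree_adj_centre (hx : IsZigzag d x) (hk : k ≤ 2 * d) :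
    (leftoverTree d x ρ).Adj k (2 * d + 1) ↔ k = ρ / 2 ∨ d < k := by
  have := hx.add_le (e := 2 * d + 1 - k)
  simp only [leftoverTree, SimpleGraph.sup_adj, zigzagGraph_adj_of_lt (Nat.lt_succ_of_le hk),
    spokeGraph_adj, Set.mem_insert_iff, Set.mem_Ioc]
  lia

lemma nested_or_nested (hx : IsZigzag d x) {e e' : ℕ} (he : e ≤ d) (he' : e' ≤ d) :
    (x e' ≤ x e ∧ x e + e ≤ x e' + e') ∨ (x e ≤ x e' ∧ x e' + e' ≤ x e + e) :=
  (le_total e e').imp (hx.nested · he') (hx.nested · he)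

lemma isWheelPlane_baseTree (hx : IsZigzag d x) (hρ : ρ = 0 ∨ ρ = 2 * d) :
    IsWheelPlane d (baseTree d x ρ) where
  le_add_of_adj h hab hb := ((baseTree_adj_of_lt hab hb).1 h).1
  not_interleaved {a b p q} hab hpq hap hpb hbq hq := by
    rw [baseTree_adj_of_lt (hap.trans hpb) (hbq.le.trans hq)] at hab
    rw [baseTree_adj_of_lt (hpb.trans hbq) hq] at hpq
    have := hx.nested_or_nested (e := b - a) (e' := q - p) (by lia) (by lia)
    have := hx.add_le (e := b - a)
    have := hx.add_le (e := q - p)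
    lia
  not_under_chord _ hk hak hkb hb := by
    have := (hx.baseTree_adj_centre (hkb.le.trans hb)).1 hk
    lia

lemma isWheelPlane_leftoverTree (hx : IsZigzag d x) (hρ : ρ = 0 ∨ ρ = 2 * d) :
    IsWheelPlane d (leftoverTree d x ρ) where
  le_add_of_adj h hab hb := ((leftoverTree_adj_of_lt hab hb).1 h).1
  not_interleaved {a b p q} hab hpq hap hpb hbq hq := by
    rw [leftoverTree_adj_of_lt (hap.trans hpb) (hbq.le.trans hq)] at hab
    rw [leftoverTree_adj_of_lt (hpb.trans hbq) hq] at hpq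
    have := hx.nested_or_nested (e := b - a) (e' := q - p) (by lia) (by lia)
    lia
  not_under_chord {a b k} hab hk hak hkb hb := by
    rw [leftoverTree_adj_of_lt (hak.trans hkb) hb] at hab
    rw [hx.leftoverTree_adj_centre (hkb.le.trans hb)] at hk
    have := hx.add_le (e := b - a)
    lia

lemma le_of_leftoverTree_adj (hx : IsZigzag d x) (ha : a ≤ 2 * d) (hb : b ≤ 2 * d)
    (hab : (leftoverTree d x ρ).Adj a b) : a ≤ d ∧ b ≤ d := by
  rcases hab with h | h
  · exact hx.adj_le h
  · rw [spokeGraph_adj] at h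
    lia

lemma rootedCaterpillar_leftoverTree_Iic (hx : IsZigzag d x) (hρ : ρ = 0 ∨ ρ = 2 * d) :
    RootedCaterpillar (leftoverTree d x ρ) (Set.Iic d) (ρ / 2) := by
  have hzigzag : RootedCaterpillar (zigzagGraph x d) (Set.Iic d) (ρ / 2) := by
    have := hx.rootedCaterpillar le_rfl
    rw [hx.last, zero_add, ← bot_eq_zero, Set.Icc_bot] at this
    rcases hρ with rfl | rfl
    · exact this.1
    · rw [Nat.mul_div_cancel_left d two_pos]
      exact this.2
  refine hzigzag.congr fun a ha b hb => ⟨.inl, Or.rec id fun h => ?_⟩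
  rw [spokeGraph_adj] at h
  simp only [Set.mem_Iic] at ha hb
  lia

lemma rootedCaterpillar_leftoverTree (hx : IsZigzag d x) (hρ : ρ = 0 ∨ ρ = 2 * d) :
    RootedCaterpillar (leftoverTree d x ρ) (Set.Iic (2 * d + 1)) (2 * d + 1) := by
  have hfan : ∀ j ≤ d, RootedCaterpillar (leftoverTree d x ρ)
      (insert (2 * d + 1) (Set.Iic (d + j))) (2 * d + 1) := by
    intro j hj
    induction j with
    | zero =>
      refine (hx.rootedCaterpillar_leftoverTree_Iic hρ).attach ?_ ?_ (fun a ha hac => ?_) (.inr rfl)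
      · simp; lia
      · exact (hx.leftoverTree_adj_centre (by lia)).2 (.inl rfl)
      · have ha : a ≤ d := ha
        have := (hx.leftoverTree_adj_centre (by lia)).1 hac
        lia
    | succ j ih =>
      have hinsert : insert (2 * d + 1) (Set.Iic (d + (j + 1))) =
          insert (d + (j + 1)) (insert (2 * d + 1) (Set.Iic (d + j))) := by
        ext
        simp only [Set.mem_insert_iff, Set.mem_Iic]
        lia
      rw [hinsert]
      refine (ih (by lia)).attach ?_ ?_ (fun a ha hac => ?_) (.inl rfl)
      · simp only [Set.mem_insert_iff, Set.mem_Iic]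
        lia
      · exact ((hx.leftoverTree_adj_centre (by lia)).2 (.inr (by lia))).symm
      · refine ha.resolve_right fun ha => ?_
        have := (hx.le_of_leftoverTree_adj ((Set.mem_Iic.1 ha).trans (by lia)) (by lia) hac).2
        lia
  convert hfan d le_rfl using 1
  ext
  simp only [Set.mem_insert_iff, Set.mem_Iic]
  lia

end IsZigzag

end Trees

/-! ### Gluing the two halves of a `w`-caterpillar -/

/-- The vertex set splits into `S₀`, `S₁` and the two vertices `p` and `q`, with all edges of `D`
inside `S₀` or inside `S₁`. -/
structure IsHalving {V : Type*} (D : SimpleGraph V) (S₀ S₁ : Set V) (p q : V) : Prop where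
  disjoint : Disjoint S₀ S₁
  ne : p ≠ q
  left_notMem : p ∉ S₀ ∪ S₁
  right_notMem : q ∉ S₀ ∪ S₁
  cover : ∀ v, v ∈ S₀ ∨ v ∈ S₁ ∨ v = p ∨ v = q
  adj_mem : ∀ {a b}, D.Adj a b → a ∈ S₀ ∧ b ∈ S₀ ∨ a ∈ S₁ ∧ b ∈ S₁

open Classical in
/-- Labels for the vertices of a halving, made from labels `0, …, d` of the two halves: the second
half is moved to `d + 1, …, 2d + 1`, and `p` and the remaining vertex get the next two labels. -/
noncomputable def gluedLabel {V : Type*} (S₀ S₁ : Set V) (p : V) (d : ℕ) (f₀ f₁ : V → ℕ) (v : V) :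
    ℕ :=
  if v ∈ S₀ then f₀ v else if v ∈ S₁ then f₁ v + (d + 1)
    else if v = p then 2 * (d + 1) else 2 * (d + 1) + 1

section Gluing

variable {V : Type*} {D : SimpleGraph V} {S₀ S₁ : Set V} {p q : V} {d : ℕ}
  {x : ℕ → ℕ} {f₀ f₁ : V → ℕ} {a b r₀ r₁ v z : V}

namespace IsHalving

lemma symm (h : IsHalving D S₀ S₁ p q) : IsHalving D S₁ S₀ q p where
  disjoint := h.disjoint.symm
  ne := h.ne.symm
  left_notMem := Set.union_comm S₀ S₁ ▸ h.right_notMem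
  right_notMem := Set.union_comm S₀ S₁ ▸ h.left_notMem
  cover v := by have := h.cover v; tauto
  adj_mem hab := (h.adj_mem hab).symm

lemma gluedLabel_of_mem_left (hv : v ∈ S₀) : gluedLabel S₀ S₁ p d f₀ f₁ v = f₀ v :=
  if_pos hv

lemma gluedLabel_of_mem_right (h : IsHalving D S₀ S₁ p q) (hv : v ∈ S₁) :
    gluedLabel S₀ S₁ p d f₀ f₁ v = f₁ v + (d + 1) :=
  (if_neg (h.disjoint.notMem_of_mem_right hv)).trans (if_pos hv)

lemma gluedLabel_left (h : IsHalving D S₀ S₁ p q) :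
    gluedLabel S₀ S₁ p d f₀ f₁ p = 2 * (d + 1) := by
  have := h.left_notMem
  grind [gluedLabel]

lemma gluedLabel_right (h : IsHalving D S₀ S₁ p q) :
    gluedLabel S₀ S₁ p d f₀ f₁ q = 2 * (d + 1) + 1 := by
  have := h.right_notMem
  have := h.ne
  grind [gluedLabel]

lemma gluedLabel_cases (h : IsHalving D S₀ S₁ p q) (h₀ : IsZigzagLabelling D S₀ d x f₀)
    (h₁ : IsZigzagLabelling D S₁ d x f₁) (v : V) :
    v ∈ S₀ ∧ gluedLabel S₀ S₁ p d f₀ f₁ v = f₀ v ∧ f₀ v ≤ d ∨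
      v ∈ S₁ ∧ gluedLabel S₀ S₁ p d f₀ f₁ v = f₁ v + (d + 1) ∧ f₁ v ≤ d ∨
      v = p ∧ gluedLabel S₀ S₁ p d f₀ f₁ v = 2 * (d + 1) ∨
      v = q ∧ gluedLabel S₀ S₁ p d f₀ f₁ v = 2 * (d + 1) + 1 := by
  rcases h.cover v with hv | hv | rfl | rfl
  · exact .inl ⟨hv, gluedLabel_of_mem_left hv, h₀.le hv⟩
  · exact .inr (.inl ⟨hv, h.gluedLabel_of_mem_right hv, h₁.le hv⟩)
  · exact .inr (.inr (.inl ⟨rfl, h.gluedLabel_left⟩))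
  · exact .inr (.inr (.inr ⟨rfl, h.gluedLabel_right⟩))

lemma gluedLabel_injective (h : IsHalving D S₀ S₁ p q) (h₀ : IsZigzagLabelling D S₀ d x f₀)
    (h₁ : IsZigzagLabelling D S₁ d x f₁) :
    Function.Injective (gluedLabel S₀ S₁ p d f₀ f₁) := by
  intro a b hab
  rcases h.gluedLabel_cases h₀ h₁ a with ha | ha | ha | ha <;>
    rcases h.gluedLabel_cases h₀ h₁ b with hb | hb | hb | hb
  case inl.inl => exact h₀.bijOn.injOn ha.1 hb.1 (by lia)
  case inr.inl.inr.inl => exact h₁.bijOn.injOn ha.1 hb.1 (by lia)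
  case inr.inr.inl.inr.inr.inl => exact ha.1.trans hb.1.symm
  case inr.inr.inr.inr.inr.inr => exact ha.1.trans hb.1.symm
  all_goals lia

lemma range_gluedLabel (h : IsHalving D S₀ S₁ p q) (h₀ : IsZigzagLabelling D S₀ d x f₀)
    (h₁ : IsZigzagLabelling D S₁ d x f₁) :
    Set.range (gluedLabel S₀ S₁ p d f₀ f₁) = Set.Iic (2 * (d + 1) + 1) := by
  refine Set.Subset.antisymm ?_ fun k hk => ?_
  · rintro _ ⟨v, rfl⟩
    have := h.gluedLabel_cases h₀ h₁ v
    simp only [Set.mem_Iic]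
    lia
  · simp only [Set.mem_Iic] at hk
    obtain hk | hk | rfl | rfl :
      k ≤ d ∨ (d + 1 ≤ k ∧ k - (d + 1) ≤ d) ∨ k = 2 * (d + 1) ∨ k = 2 * (d + 1) + 1 := by lia
    · obtain ⟨v, hv, rfl⟩ := h₀.bijOn.surjOn hk
      exact ⟨v, gluedLabel_of_mem_left hv⟩
    · obtain ⟨v, hv, hvk⟩ := h₁.bijOn.surjOn hk.2
      exact ⟨v, by rw [h.gluedLabel_of_mem_right hv, hvk, Nat.sub_add_cancel hk.1]⟩
    · exact ⟨p, h.gluedLabel_left⟩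
    · exact ⟨q, h.gluedLabel_right⟩

lemma adj_iff_gluedLabel (h : IsHalving D S₀ S₁ p q) (h₀ : IsZigzagLabelling D S₀ d x f₀)
    (h₁ : IsZigzagLabelling D S₁ d x f₁) :
    D.Adj a b ↔
      (zigzagGraph x d).Adj (gluedLabel S₀ S₁ p d f₀ f₁ a) (gluedLabel S₀ S₁ p d f₀ f₁ b) ∨
      (zigzagGraph (fun e => x e + (d + 1)) d).Adj (gluedLabel S₀ S₁ p d f₀ f₁ a)
        (gluedLabel S₀ S₁ p d f₀ f₁ b) := by
  have ha' := h.gluedLabel_cases h₀ h₁ a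
  have hb' := h.gluedLabel_cases h₀ h₁ b
  rw [zigzagGraph_add_adj]
  constructor
  · intro hab
    rcases h.adj_mem hab with ⟨ha, hb⟩ | ⟨ha, hb⟩
    · rw [gluedLabel_of_mem_left ha, gluedLabel_of_mem_left hb]
      exact .inl ((h₀.adj_iff ha hb).1 hab)
    · rw [h.gluedLabel_of_mem_right ha, h.gluedLabel_of_mem_right hb]
      simpa using .inr ((h₁.adj_iff ha hb).1 hab)
  · rintro (hab | ⟨ha, hb, hab⟩)
    · have hle := h₀.isZigzag.adj_le hab
      obtain ⟨ha, hfa, -⟩ := ha'.resolve_right (by lia)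
      obtain ⟨hb, hfb, -⟩ := hb'.resolve_right (by lia)
      rw [hfa, hfb] at hab
      exact (h₀.adj_iff ha hb).2 hab
    · have hle := h₁.isZigzag.adj_le hab
      obtain ⟨ha, hfa, -⟩ := (ha'.resolve_left (by lia)).resolve_right (by lia)
      obtain ⟨hb, hfb, -⟩ := (hb'.resolve_left (by lia)).resolve_right (by lia)
      rw [hfa, hfb, Nat.add_sub_cancel, Nat.add_sub_cancel] at hab
      exact (h₁.adj_iff ha hb).2 hab

lemma sup_edges_eq_comap_baseTree (h : IsHalving D S₀ S₁ p q) (h₀ : IsZigzagLabelling D S₀ d x f₀)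
    (h₁ : IsZigzagLabelling D S₁ d x f₁) (hr₀ : r₀ ∈ S₀) (hf₀ : f₀ r₀ = 0) (hr₁ : r₁ ∈ S₁)
    (hf₁ : f₁ r₁ = 0) :
    D ⊔ SimpleGraph.edge r₀ r₁ ⊔ SimpleGraph.edge r₁ p ⊔ SimpleGraph.edge z q =
      (baseTree (d + 1) (Function.update x (d + 1) 0) (gluedLabel S₀ S₁ p d f₀ f₁ z)).comap
        (gluedLabel S₀ S₁ p d f₀ f₁) := by
  have hinj := h.gluedLabel_injective h₀ h₁
  have hlr₀ : gluedLabel S₀ S₁ p d f₀ f₁ r₀ = 0 := (gluedLabel_of_mem_left hr₀).trans hf₀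
  have hlr₁ : gluedLabel S₀ S₁ p d f₀ f₁ r₁ = d + 1 := by
    rw [h.gluedLabel_of_mem_right hr₁, hf₁, zero_add]
  have hlp : gluedLabel S₀ S₁ p d f₀ f₁ p = d + 1 + (d + 1) := by rw [h.gluedLabel_left, two_mul]
  have hne₀ : r₀ ≠ r₁ := h.disjoint.ne_of_mem hr₀ hr₁
  have hne₁ : r₁ ≠ p := fun heq => h.left_notMem (.inr (heq ▸ hr₁))
  have hupdate : (fun e => Function.update x (d + 1) 0 e + (d + 1)) =
      Function.update (fun e => x e + (d + 1)) (d + 1) (d + 1) := by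
    ext e
    grind
  ext a b
  simp only [SimpleGraph.sup_adj, SimpleGraph.edge_adj, SimpleGraph.comap_adj, baseTree, hupdate,
    zigzagGraph_succ_adj, spokeGraph_adj, h.adj_iff_gluedLabel h₀ h₁, zero_add,
    Set.mem_singleton_iff]
  rw [← h.gluedLabel_right (f₀ := f₀) (f₁ := f₁), ← hlp, ← hlr₁, ← hlr₀]
  simp only [hinj.eq_iff, hinj.ne_iff]
  grind

end IsHalving

end Gluing

/-- An isomorphism `g` from `T` onto the tree `baseTree d x ρ` on the labels `0, …, 2d + 1`. -/
structure IsBaseLabelling {V : Type*} (T : SimpleGraph V) (d : ℕ) (x : ℕ → ℕ) (ρ : ℕ) (g : V → ℕ) :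
    Prop where
  isZigzag : IsZigzag d x
  eq_zero_or_eq_two_mul : ρ = 0 ∨ ρ = 2 * d
  injective : Function.Injective g
  range_eq : Set.range g = Set.Iic (2 * d + 1)
  eq_comap : T = (baseTree d x ρ).comap g

section WCaterpillar

open SimpleGraph (edge)

variable {V W : Type*} {D G T : SimpleGraph V} {S₀ S₁ : Set V} {d : ℕ}
  {x : ℕ → ℕ} {f f₀ f₁ : V → ℕ} {a b p q r r₀ r₁ s t v z u₁ u₂ u₃ u₄ : V}

lemma connectedFrom_supp (hle : D ≤ G) : ConnectedFrom G (D.connectedComponentMk r).supp r := by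
  intro U hr hU a ha
  obtain ⟨p⟩ : D.Reachable a r := SimpleGraph.ConnectedComponent.eq.1 ha
  induction p with
  | nil => exact hr
  | cons hab p ih =>
    exact hU _ (ih hr hU (SimpleGraph.ConnectedComponent.eq.2 p.reachable)) _ ha (hle hab.symm)

lemma exists_isZigzagLabelling_supp [Finite V] (hG : NoTripleBranch (D ⊔ edge r s))
    (hne : D.connectedComponentMk r ≠ D.connectedComponentMk s) (hs : D.Adj s t) :
    ∃ d x f, IsZigzagLabelling D (D.connectedComponentMk r).supp d x f ∧ f r = 0 := by
  have hrs : r ≠ s := fun h => hne (h ▸ rfl)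
  have hout : HasOuterBranch (D ⊔ edge r s) (D.connectedComponentMk r).supp r :=
    ⟨s, hne.symm, .inr (by simp [SimpleGraph.edge_adj, hrs]), t,
      fun h => hne (SimpleGraph.ConnectedComponent.connectedComponentMk_eq_of_adj (h ▸ hs)).symm,
      .inl hs⟩
  have hr : r ∈ (D.connectedComponentMk r).supp := rfl
  refine ((hG.rootedCaterpillar (Set.toFinite _) hr (connectedFrom_supp le_sup_left)
    hout).congr fun a ha b hb => ?_).exists_isZigzagLabelling
  have hsa : a ≠ s := fun h => hne (h ▸ ha).symm
  have hsb : b ≠ s := fun h => hne (h ▸ hb).symm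
  simp [SimpleGraph.edge_adj, hsa, hsb]

lemma IsZigzagLabelling.exists_of_iso {H : SimpleGraph W} {S : Set V} {S' : Set W}
    (h : IsZigzagLabelling G S d x f) (φ : H.induce S' ≃g G.induce S) :
    ∃ f', IsZigzagLabelling H S' d x f' ∧ ∀ w : S', f' w = f (φ w) := by
  classical
  let f' : W → ℕ := fun w => if hw : w ∈ S' then f (φ ⟨w, hw⟩) else 0
  have hf' : ∀ w : S', f' w = f (φ w) := fun w => dif_pos w.2
  refine ⟨f', ⟨h.isZigzag, ?_, fun a ha b hb => ?_⟩, hf'⟩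
  · refine ⟨fun w hw => ?_, fun v hv w hw hvw => ?_, fun k hk => ?_⟩
    · rw [hf' ⟨w, hw⟩]
      exact h.bijOn.mapsTo (φ _).2
    · rw [hf' ⟨v, hv⟩, hf' ⟨w, hw⟩] at hvw
      exact congrArg Subtype.val
        (φ.injective (Subtype.ext (h.bijOn.injOn (φ _).2 (φ _).2 hvw)))
    · obtain ⟨v, hv, rfl⟩ := h.bijOn.surjOn hk
      exact ⟨φ.symm ⟨v, hv⟩, Subtype.prop _, by rw [hf', φ.apply_symm_apply]⟩
  · rw [hf' ⟨a, ha⟩, hf' ⟨b, hb⟩, ← h.adj_iff (φ _).2 (φ _).2]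
    exact (φ.map_adj_iff (v := ⟨a, ha⟩) (w := ⟨b, hb⟩)).symm

lemma notMem_supp_of_isolated (hv : ∀ w, ¬ D.Adj v w) (hr : D.Adj r s) :
    v ∉ (D.connectedComponentMk r).supp := by
  intro hvr
  obtain ⟨p⟩ : D.Reachable v r := SimpleGraph.ConnectedComponent.eq.1 hvr
  cases p with
  | nil => exact hv _ hr
  | cons h _ => exact hv _ h

lemma isHalving_of_p4SymWitness (hT : P4SymWitness T u₁ u₂ u₃ u₄ a b) (hne : u₁ ≠ a) :
    IsHalving (delP4 T u₁ u₂ u₃ u₄) ((delP4 T u₁ u₂ u₃ u₄).connectedComponentMk u₃).supp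
      ((delP4 T u₁ u₂ u₃ u₄).connectedComponentMk b).supp u₁ a := by
  obtain ⟨hu₁, ha, ⟨s, hs⟩, ⟨t, ht⟩, hcomp, hcover, -⟩ := hT
  exact
  { disjoint := SimpleGraph.pairwise_disjoint_supp_connectedComponent _ hcomp
    ne := hne
    left_notMem := fun h => h.elim (notMem_supp_of_isolated hu₁ hs) (notMem_supp_of_isolated hu₁ ht)
    right_notMem := fun h => h.elim (notMem_supp_of_isolated ha hs) (notMem_supp_of_isolated ha ht)
    cover := fun v => by have := hcover v; tauto
    adj_mem := fun {v w} hvw => by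
      rcases hcover v with rfl | rfl | hv | hv
      · exact absurd hvw (hu₁ w)
      · exact absurd hvw (ha w)
      · exact .inl ⟨hv, (SimpleGraph.ConnectedComponent.mem_supp_congr_adj _ hvw).1 hv⟩
      · exact .inr ⟨hv, (SimpleGraph.ConnectedComponent.mem_supp_congr_adj _ hvw).1 hv⟩ }

lemma exists_isZigzagLabelling_of_p4SymWitness [Finite V] (hT : P4SymWitness T u₁ u₂ u₃ u₄ a b)
    (hG : NoTripleBranch (delP4 T u₁ u₂ u₃ u₄ ⊔ edge u₃ b)) :
    ∃ d x f₀ f₁,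
      IsZigzagLabelling (delP4 T u₁ u₂ u₃ u₄)
        ((delP4 T u₁ u₂ u₃ u₄).connectedComponentMk u₃).supp d x f₀ ∧ f₀ u₃ = 0 ∧
      IsZigzagLabelling (delP4 T u₁ u₂ u₃ u₄)
        ((delP4 T u₁ u₂ u₃ u₄).connectedComponentMk b).supp d x f₁ ∧ f₁ b = 0 := by
  obtain ⟨-, -, -, ⟨t, ht⟩, hcomp, -, φ, hφ⟩ := hT
  obtain ⟨d, x, f₀, h₀, hf₀⟩ := exists_isZigzagLabelling_supp hG hcomp ht
  obtain ⟨f₁, h₁, hf₁⟩ := h₀.exists_of_iso φ.symm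
  refine ⟨d, x, f₀, f₁, h₀, hf₀, h₁, ?_⟩
  have hb : φ.symm ⟨b, rfl⟩ = ⟨u₃, rfl⟩ := φ.symm_apply_eq.2 (Subtype.ext hφ.symm)
  rw [hf₁ ⟨b, rfl⟩, hb, hf₀]

lemma delP4_sup_edges (h₁₂ : T.Adj u₁ u₂) (h₂₃ : T.Adj u₂ u₃) (h₃₄ : T.Adj u₃ u₄) :
    T = delP4 T u₁ u₂ u₃ u₄ ⊔ edge u₁ u₂ ⊔ edge u₂ u₃ ⊔ edge u₃ u₄ := by
  ext a b
  have := h₁₂.ne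
  have := h₂₃.ne
  have := h₃₄.ne
  simp only [delP4, SimpleGraph.sup_adj, SimpleGraph.deleteEdges_adj, SimpleGraph.edge_adj,
    Set.mem_insert_iff, Set.mem_singleton_iff, Sym2.eq_iff]
  grind [SimpleGraph.Adj.symm]

lemma noTripleBranch_delP4_sup_edge [Finite V]
    (hT : IsCaterpillar T ∨ IsCaterpillar (T.induce {v | v ≠ u₁}))
    (hu₁ : ∀ w, ¬ (delP4 T u₁ u₂ u₃ u₄).Adj u₁ w) (hb : T.Adj u₃ b) (h₃ : u₁ ≠ u₃) (h₁ : u₁ ≠ b) :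
    NoTripleBranch (delP4 T u₁ u₂ u₃ u₄ ⊔ edge u₃ b) := by
  have hdelete : NoTripleBranch (T.deleteIncidenceSet u₁) := by
    rcases hT with hT | hT
    · exact (noTripleBranch_of_isCaterpillar hT).mono (T.deleteIncidenceSet_le u₁)
    · exact (noTripleBranch_of_isCaterpillar hT).deleteIncidenceSet_of_induce
  refine hdelete.mono (sup_le (fun v w hvw => ?_) ?_)
  · refine T.deleteIncidenceSet_adj.2 ⟨T.deleteEdges_le _ hvw, ?_, ?_⟩
    · rintro rfl
      exact hu₁ w hvw
    · rintro rfl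
      exact hu₁ v hvw.symm
  · exact (SimpleGraph.edge_le_iff _).2 (.inr (T.deleteIncidenceSet_adj.2 ⟨hb, h₃.symm, h₁.symm⟩))

lemma IsHalving.isBaseLabelling (h : IsHalving D S₀ S₁ p q) (h₀ : IsZigzagLabelling D S₀ d x f₀)
    (h₁ : IsZigzagLabelling D S₁ d x f₁) (hr₀ : r₀ ∈ S₀) (hf₀ : f₀ r₀ = 0) (hr₁ : r₁ ∈ S₁)
    (hf₁ : f₁ r₁ = 0) (hz : z = r₀ ∨ z = p) :
    IsBaseLabelling (D ⊔ edge r₀ r₁ ⊔ edge r₁ p ⊔ edge z q) (d + 1) (Function.update x (d + 1) 0)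
      (gluedLabel S₀ S₁ p d f₀ f₁ z) (gluedLabel S₀ S₁ p d f₀ f₁) where
  isZigzag := h₀.isZigzag.succ
  eq_zero_or_eq_two_mul := by
    refine hz.imp ?_ ?_ <;> rintro rfl
    · exact (gluedLabel_of_mem_left hr₀).trans hf₀
    · exact h.gluedLabel_left
  injective := h.gluedLabel_injective h₀ h₁
  range_eq := h.range_gluedLabel h₀ h₁
  eq_comap := h.sup_edges_eq_comap_baseTree h₀ h₁ hr₀ hf₀ hr₁ hf₁

theorem exists_isBaseLabelling_of_isWCaterpillar [Finite V] (hT : IsWCaterpillar T) :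
    ∃ d x ρ g, IsBaseLabelling T d x ρ g := by
  obtain ⟨-, u₁, u₂, u₃, u₄, ⟨hne₁₂, hne₁₃, hne₁₄, -, -, -, h₁₂, h₂₃, h₃₄, hsym⟩, hcat⟩ := hT
  rw [delP4_sup_edges h₁₂ h₂₃ h₃₄]
  rcases hsym with hw | hw
  · obtain ⟨d, x, f₀, f₁, h₀, hf₀, h₁, hf₁⟩ := exists_isZigzagLabelling_of_p4SymWitness hw
      (noTripleBranch_delP4_sup_edge hcat hw.1 h₂₃.symm hne₁₃ hne₁₂)
    have := (isHalving_of_p4SymWitness hw hne₁₄).isBaseLabelling h₀ h₁ rfl hf₀ rfl hf₁ (.inl rfl)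
    rw [SimpleGraph.edge_comm u₁ u₂, SimpleGraph.edge_comm u₂ u₃, sup_right_comm (delP4 ..)]
    exact ⟨_, _, _, _, this⟩
  · obtain ⟨d, x, f₀, f₁, h₀, hf₀, h₁, hf₁⟩ := exists_isZigzagLabelling_of_p4SymWitness hw
      (noTripleBranch_delP4_sup_edge hcat hw.1 h₃₄ hne₁₃ hne₁₄)
    have := (isHalving_of_p4SymWitness hw hne₁₂).symm.isBaseLabelling h₁ h₀ rfl hf₁ rfl hf₀
      (.inr rfl)
    rw [SimpleGraph.edge_comm u₁ u₂, SimpleGraph.edge_comm u₂ u₃, SimpleGraph.edge_comm u₃ u₄,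
      sup_right_comm, sup_right_comm (delP4 ..), sup_right_comm]
    exact ⟨_, _, _, _, this⟩

end WCaterpillar

/-! ### The partition -/

open Classical in
/-- The trees of the partition: `d` consecutive rotations of `baseTree d x ρ` and, as the last one,
the rotation of `leftoverTree d x ρ` which contains the remaining edges. -/
noncomputable def wheelTree (d : ℕ) (x : ℕ → ℕ) (ρ : ℕ) (j : Fin (d + 1)) :
    SimpleGraph (WV (d + 1)) :=
  if j = Fin.last d then (leftoverTree d x ρ).comap (wheelLabel d 1)
  else (baseTree d x ρ).comap (wheelLabel d (2 * d + 1 - j))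

section Partition

variable {d e ρ k l : ℕ} {x : ℕ → ℕ} {j : Fin (d + 1)}

lemma wheelTree_last : wheelTree d x ρ (Fin.last d) = (leftoverTree d x ρ).comap (wheelLabel d 1) :=
  if_pos rfl

lemma wheelTree_of_ne (hj : j ≠ Fin.last d) :
    wheelTree d x ρ j = (baseTree d x ρ).comap (wheelLabel d (2 * d + 1 - j)) :=
  if_neg hj

namespace IsZigzag

lemma baseTree_adj_of_shift (hx : IsZigzag d x) (he : 1 ≤ e) (hed : e ≤ d) (hk : k ≤ 2 * d)
    (hl : l ≤ 2 * d) (hkl : l = k + e ∨ l + (2 * d + 1) = k + e) :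
    (baseTree d x ρ).Adj k l ↔ k = x e ∨ k = x e + d := by
  rcases hkl with rfl | hkl
  · rw [baseTree_adj_of_lt (by lia) hl, Nat.add_sub_cancel_left]
    lia
  · have := hx.add_le hed
    rw [SimpleGraph.adj_comm, baseTree_adj_of_lt (by lia) hk]
    lia

lemma leftoverTree_adj_of_shift (hx : IsZigzag d x) (he : 1 ≤ e) (hed : e ≤ d) (hk : k ≤ 2 * d)
    (hl : l ≤ 2 * d) (hkl : l = k + e ∨ l + (2 * d + 1) = k + e) :
    (leftoverTree d x ρ).Adj k l ↔ k = x e := by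
  rcases hkl with rfl | hkl
  · rw [leftoverTree_adj_of_lt (by lia) hl, Nat.add_sub_cancel_left]
    lia
  · have := hx.add_le hed
    rw [SimpleGraph.adj_comm, leftoverTree_adj_of_lt (by lia) hk]
    lia

lemma wheelTree_adj_some_iff (hx : IsZigzag d x) (he : 1 ≤ e) (hed : e ≤ d)
    {i i' : Fin (2 * (d + 1) - 1)} (hi : (i' : ℕ) = i + e ∨ (i' : ℕ) + (2 * d + 1) = i + e) {t : ℕ}
    (ht : t ≤ 2 * d) (hit : (i : ℕ) = x e + t ∨ i + (2 * d + 1) = x e + t) :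
    (wheelTree d x ρ j).Adj (some i) (some i') ↔
      if j = Fin.last d then t = 2 * d else t = j ∨ t = j + d := by
  have hxe := hx.add_le hed
  split_ifs with hj
  · rw [hj, wheelTree_last, SimpleGraph.comap_adj, hx.leftoverTree_adj_of_shift he hed
      (wheelLabel_some_le (by lia) i) (wheelLabel_some_le (by lia) i')
      (by simp only [wheelLabel]; grind)]
    simp only [wheelLabel]
    grind
  · have := Fin.val_lt_last hj
    rw [wheelTree_of_ne hj, SimpleGraph.comap_adj, hx.baseTree_adj_of_shift he hed
      (wheelLabel_some_le (by lia) i) (wheelLabel_some_le (by lia) i')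
      (by simp only [wheelLabel]; grind)]
    simp only [wheelLabel]
    grind

lemma wheelTree_adj_none_iff (hx : IsZigzag d x) (hρ : ρ = 0 ∨ ρ = 2 * d)
    {i : Fin (2 * (d + 1) - 1)} {t : ℕ} (ht : t ≤ 2 * d)
    (hit : (i : ℕ) = ρ + t ∨ i + (2 * d + 1) = ρ + t) :
    (wheelTree d x ρ j).Adj (some i) none ↔ if j = Fin.last d then d ≤ t else t = j := by
  split_ifs with hj
  · rw [hj, wheelTree_last, SimpleGraph.comap_adj]
    refine (hx.leftoverTree_adj_centre (wheelLabel_some_le (by lia) i)).trans ?_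
    simp only [wheelLabel]
    grind
  · have := Fin.val_lt_last hj
    rw [wheelTree_of_ne hj, SimpleGraph.comap_adj]
    refine (hx.baseTree_adj_centre (wheelLabel_some_le (by lia) i)).trans ?_
    simp only [wheelLabel]
    grind

lemma existsUnique_wheelTree_adj_none (hx : IsZigzag d x) (hρ : ρ = 0 ∨ ρ = 2 * d)
    (i : Fin (2 * (d + 1) - 1)) : ∃! j, (wheelTree d x ρ j).Adj (some i) none := by
  obtain ⟨t, ht, hit⟩ : ∃ t ≤ 2 * d, (i : ℕ) = ρ + t ∨ i + (2 * d + 1) = ρ + t :=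
    if h : ρ ≤ i then ⟨i - ρ, by lia, by lia⟩ else ⟨i + (2 * d + 1) - ρ, by lia, by lia⟩
  simp only [hx.wheelTree_adj_none_iff hρ ht hit, Fin.ext_iff, Fin.val_last]
  refine ⟨⟨min t d, by lia⟩, by grind, by grind⟩

lemma existsUnique_wheelTree_adj_some (hx : IsZigzag d x) (he : 1 ≤ e) (hed : e ≤ d)
    {i i' : Fin (2 * (d + 1) - 1)} (hi : (i' : ℕ) = i + e ∨ (i' : ℕ) + (2 * d + 1) = i + e) :
    ∃! j, (wheelTree d x ρ j).Adj (some i) (some i') := by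
  have hxe := hx.add_le hed
  obtain ⟨t, ht, hit⟩ : ∃ t ≤ 2 * d, (i : ℕ) = x e + t ∨ i + (2 * d + 1) = x e + t :=
    if h : x e ≤ i then ⟨i - x e, by lia, by lia⟩ else ⟨i + (2 * d + 1) - x e, by lia, by lia⟩
  simp only [hx.wheelTree_adj_some_iff he hed hi ht hit, Fin.ext_iff, Fin.val_last]
  obtain h | h | h : t < d ∨ d ≤ t ∧ t < 2 * d ∨ t = 2 * d := by lia
  · exact ⟨⟨t, by lia⟩, by grind, by grind⟩
  · exact ⟨⟨t - d, by lia⟩, by grind, by grind⟩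
  · exact ⟨Fin.last d, by grind, by grind⟩

lemma isPartition_wheelTree (hx : IsZigzag d x) (hρ : ρ = 0 ∨ ρ = 2 * d) :
    IsPartition (wheelTree d x ρ) := by
  have hsome : ∀ {i i' : Fin (2 * (d + 1) - 1)}, i < i' →
      ∃! j, (wheelTree d x ρ j).Adj (some i) (some i') := by
    intro i i' hlt
    by_cases h : (i' : ℕ) ≤ i + d
    · exact hx.existsUnique_wheelTree_adj_some (e := i' - i) (by lia) (by lia) (by lia)
    · simp only [SimpleGraph.adj_comm _ (some i)]
      exact hx.existsUnique_wheelTree_adj_some (e := i + (2 * d + 1) - i') (by lia) (by lia)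
        (by lia)
  rintro (_ | i) (_ | i') hne
  · exact absurd rfl hne
  · simp only [SimpleGraph.adj_comm _ none]
    exact hx.existsUnique_wheelTree_adj_none hρ i'
  · exact hx.existsUnique_wheelTree_adj_none hρ i
  · rcases lt_or_gt_of_ne (fun h => hne (congrArg some h)) with hlt | hlt
    · exact hsome hlt
    · simp only [SimpleGraph.adj_comm _ (some i)]
      exact hsome hlt

lemma nonCrossing_wheelTree {c : ℝ × ℝ} {R θ : ℝ} (hR : 0 < R) (hx : IsZigzag d x)
    (hρ : ρ = 0 ∨ ρ = 2 * d) : NonCrossing (wpos (d + 1) c R θ) (wheelTree d x ρ j) := by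
  rw [wheelTree]
  split_ifs
  · exact (hx.isWheelPlane_leftoverTree hρ).nonCrossing hR (by lia)
  · exact (hx.isWheelPlane_baseTree hρ).nonCrossing hR (by lia)

lemma isCaterpillar_wheelTree_last (hx : IsZigzag d x) (hρ : ρ = 0 ∨ ρ = 2 * d) :
    IsCaterpillar (wheelTree d x ρ (Fin.last d)) := by
  have hrange := range_wheelLabel (d := d) (s := 1) (by lia)
  obtain ⟨r, -, hr⟩ := (hx.rootedCaterpillar_leftoverTree hρ).comap
    (wheelLabel_injective (s := 1) (by lia)) hrange.ge
  rw [← hrange, Set.preimage_range] at hr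
  rw [wheelTree_last]
  exact hr.isCaterpillar

lemma boundaryCount_wheelTree_last (hx : IsZigzag d x) (hd : 1 ≤ d) :
    boundaryCount (wheelTree d x ρ (Fin.last d)) = 1 := by
  have hx₁ := hx.add_le hd
  refine Set.ncard_eq_one.2 ⟨⟨if x 1 = 0 then 2 * d else x 1 - 1, by grind⟩, ?_⟩
  ext i
  have hnxt : (nxt i : ℕ) = i + 1 ∨ (nxt i : ℕ) + (2 * d + 1) = i + 1 := by
    obtain hi | hi : (i : ℕ) + 1 < 2 * (d + 1) - 1 ∨ (i : ℕ) + 1 = 2 * (d + 1) - 1 := by lia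
    · exact .inl (Nat.mod_eq_of_lt hi)
    · simp only [nxt, hi, Nat.mod_self]
      lia
  rw [Set.mem_ofPred_eq, Set.mem_singleton_iff, Fin.ext_iff]
  by_cases h : x 1 ≤ i
  · rw [hx.wheelTree_adj_some_iff le_rfl hd hnxt (t := i - x 1) (by lia) (by lia), if_pos rfl]
    grind
  · rw [hx.wheelTree_adj_some_iff le_rfl hd hnxt (t := i + (2 * d + 1) - x 1) (by lia) (by lia),
      if_pos rfl]
    grind

end IsZigzag

lemma nonempty_iso_comap {U V W : Type*} (H : SimpleGraph U) {f : V → U} {g : W → U}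
    (hf : Function.Injective f) (hg : Function.Injective g) (hfg : Set.range f = Set.range g) :
    Nonempty (H.comap f ≃g H.comap g) := by
  let φ : V ≃ W := (Equiv.ofInjective f hf).trans
    ((Equiv.setCongr hfg).trans (Equiv.ofInjective g hg).symm)
  have hφ : ∀ v, g (φ v) = f v := fun v => Equiv.apply_ofInjective_symm hg _
  exact ⟨φ, by simp [hφ]⟩

lemma IsBaseLabelling.nonempty_wheelTree_iso {V : Type*} {T : SimpleGraph V} {g : V → ℕ}
    (h : IsBaseLabelling T d x ρ g) (hj : j ≠ Fin.last d) : Nonempty (wheelTree d x ρ j ≃g T) := by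
  rw [wheelTree_of_ne hj, h.eq_comap]
  exact nonempty_iso_comap _ (wheelLabel_injective (by lia)) h.injective
    ((range_wheelLabel (by lia)).trans h.range_eq.symm)

lemma IsBaseLabelling.card_eq {V : Type*} {T : SimpleGraph V} {g : V → ℕ}
    (h : IsBaseLabelling T d x ρ g) : Nat.card V = 2 * (d + 1) := by
  rw [← Nat.card_range_of_injective h.injective, h.range_eq, Nat.card_coe_set_eq, Set.ncard_Iic_nat]
  ring

end Partition

end WheelPartition

open WheelCfg GraphDefs in
/-- For every `w`-caterpillar `T` on `2n` vertices, the complete geometric graph on a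
regular wheel configuration of `2n` points can be partitioned into `n` plane spanning
trees, `n-1` of which are isomorphic to `T`, while the remaining one is a caterpillar
with exactly one boundary edge. -/
theorem stmt8 (n : ℕ) (hn : 2 ≤ n) (c : ℝ × ℝ) (R θ : ℝ) (hR : 0 < R)
    (T : SimpleGraph (Fin (2*n))) (hT : IsWCaterpillar T) :
    ∃ 𝒯 : Fin n → SimpleGraph (WV n),
      IsPartition 𝒯 ∧
      (∀ i, PlaneSpanningTree (wpos n c R θ) (𝒯 i)) ∧
      ∃ i₀ : Fin n,
        (IsCaterpillar (𝒯 i₀) ∧ boundaryCount (𝒯 i₀) = 1) ∧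
        (∀ j : Fin n, j ≠ i₀ → Nonempty (𝒯 j ≃g T)) := by
  obtain ⟨d, x, ρ, g, hg⟩ := WheelPartition.exists_isBaseLabelling_of_isWCaterpillar hT
  obtain rfl : n = d + 1 := by
    have := hg.card_eq
    rw [Nat.card_fin] at this
    lia
  have hρ := hg.eq_zero_or_eq_two_mul
  have hcat := hg.isZigzag.isCaterpillar_wheelTree_last hρ
  refine ⟨WheelPartition.wheelTree d x ρ, hg.isZigzag.isPartition_wheelTree hρ,
    fun j => ⟨?_, hg.isZigzag.nonCrossing_wheelTree hR hρ⟩, Fin.last d,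
    ⟨hcat, hg.isZigzag.boundaryCount_wheelTree_last (by lia)⟩,
    fun j hj => hg.nonempty_wheelTree_iso hj⟩
  by_cases hj : j = Fin.last d
  · exact hj ▸ hcat.1
  · exact (hg.nonempty_wheelTree_iso hj).some.isTree_iff.2 hT.1
end

section
/- A set of 2n points in general position in which every point is incident with exactly one halving line has exactly n halving lines, and these can be labeled h_0, ..., h_{n−1} in anticlockwise order so that h_i passes through points labeled v_i and v_{i+n}, where v_0, v_1, ..., v_{2n−1} are in anticlockwise (radial) order; moreover h_i splits the remaining points into {v_{i+1}, ..., v_{i+n−1}} and {v_{i+n+1}, ..., v_{i+2n−1}} (indices mod 2n). -/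
namespace Halving

/-- Signed side of `p` with respect to the oriented line through `u`, `v`. -/
def sideVal (u v p : ℝ × ℝ) : ℝ :=
  (v.1 - u.1) * (p.2 - u.2) - (v.2 - u.2) * (p.1 - u.1)

/-- General position: no three distinct points of `P` are collinear. -/
def GenPos (P : Finset (ℝ × ℝ)) : Prop :=
  ∀ p ∈ P, ∀ q ∈ P, ∀ r ∈ P, p ≠ q → p ≠ r → q ≠ r →
    ¬ Collinear ℝ ({p, q, r} : Set (ℝ × ℝ))

/-- Points of `P` strictly on the negative side of the line through `u`, `v`. -/
noncomputable def negSide (P : Finset (ℝ × ℝ)) (u v : ℝ × ℝ) : Finset (ℝ × ℝ) :=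
  P.filter (fun p => sideVal u v p < 0)

/-- Points of `P` strictly on the positive side of the line through `u`, `v`. -/
noncomputable def posSide (P : Finset (ℝ × ℝ)) (u v : ℝ × ℝ) : Finset (ℝ × ℝ) :=
  P.filter (fun p => 0 < sideVal u v p)

/-- A `k`-halving line of a set `P` of `2m` points: a line through two points `u ≠ v` of `P`
splitting the remaining points into parts of sizes `m-1-k` and `m-1+k`.  `k = 0` is a
halving line. -/
def IsKHalving (P : Finset (ℝ × ℝ)) (m k : ℕ) (u v : ℝ × ℝ) : Prop :=
  u ∈ P ∧ v ∈ P ∧ u ≠ v ∧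
  min (negSide P u v).card (posSide P u v).card = m - 1 - k ∧
  max (negSide P u v).card (posSide P u v).card = m - 1 + k

/-- A halving line. -/
abbrev IsHalving (P : Finset (ℝ × ℝ)) (m : ℕ) (u v : ℝ × ℝ) : Prop := IsKHalving P m 0 u v

/-- Non-crossing geometric graph on points of the plane. -/
def NonCrossingG (G : SimpleGraph (ℝ × ℝ)) : Prop :=
  ∀ a b c d : ℝ × ℝ, G.Adj a b → G.Adj c d → s(a,b) ≠ s(c,d) →
    Disjoint (openSegment ℝ a b) (openSegment ℝ c d)

/-- A plane spanning tree of a finite point set `P`: all edges join points of `P`,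
the graph induced on `P` is a tree, and no two edges cross. -/
def PlaneSpanningTreeOn (P : Finset (ℝ × ℝ)) (G : SimpleGraph (ℝ × ℝ)) : Prop :=
  (∀ a b, G.Adj a b → a ∈ P ∧ b ∈ P) ∧ (G.induce (↑P : Set (ℝ × ℝ))).IsTree ∧ NonCrossingG G

/-- Partition of the edge set of the complete geometric graph on `P`. -/
def IsGeomPartition (P : Finset (ℝ × ℝ)) {n : ℕ} (T : Fin n → SimpleGraph (ℝ × ℝ)) : Prop :=
  ∀ a b : ℝ × ℝ, a ∈ P → b ∈ P → a ≠ b → ∃! i : Fin n, (T i).Adj a b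

/-- The number of halving lines of `P` (as unordered pairs of points). -/
noncomputable def halvingCount (P : Finset (ℝ × ℝ)) (m : ℕ) : ℕ :=
  Set.ncard {e : Sym2 (ℝ × ℝ) | ∃ u v, e = s(u,v) ∧ IsHalving P m u v}

/-- An `h`-labeling: a bijective labeling `v_0, …, v_{2n-1}` of `P` such that for every `i`
the line through `v_i` and `v_{i+n}` is a halving line. -/
def IsHLabeling (P : Finset (ℝ × ℝ)) (n : ℕ) (v : Fin (2*n) → ℝ × ℝ) : Prop :=
  Function.Injective v ∧ Set.range v = (↑P : Set (ℝ × ℝ)) ∧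
  ∀ i : Fin (2*n), IsHalving P n (v i) (v (i + ⟨n % (2*n), Nat.mod_lt _ i.pos⟩))

/-- Convex position: every point of `P` is outside the convex hull of the others. -/
def ConvexPos (P : Finset (ℝ × ℝ)) : Prop :=
  ∀ p ∈ P, p ∉ convexHull ℝ (↑(P.erase p) : Set (ℝ × ℝ))

end Halving

/-!
Let `a b` be a halving line and `p` a point on one side of it. The half-plane through `p` parallel
to `a b` that faces the line contains at least `n` points. Turning a line around `p` through that
half-plane changes the number of points on its negative side by at most one at each point of the
half-plane, so a discrete intermediate value argument yields a halving line through `p` and a point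
closer to `a b`, or beyond it. If every point has a unique halving partner, two points on the same
side of `a b` cannot be partners, since each would be closer than the other. So every halving line
has its endpoints on different sides of every other halving line, and the side of `q` with respect
to the halving line of `p` is determined by the cross product of the directions of the two lines.
Sorting the halving lines by direction gives the labeling.
-/

namespace Halving

open scoped Finset

/-- The planar cross product (determinant) of two vectors. It is positive when `y` is anticlockwise
of `x` by less than a half turn. -/
def cross (x y : ℝ × ℝ) : ℝ := x.1 * y.2 - x.2 * y.1

lemma sideVal_eq_cross (u v p : ℝ × ℝ) : sideVal u v p = cross (v - u) (p - u) := rfl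

lemma cross_self (x : ℝ × ℝ) : cross x x = 0 := by unfold cross; ring

lemma cross_swap (x y : ℝ × ℝ) : cross y x = -cross x y := by unfold cross; ring

lemma cross_neg_left (x y : ℝ × ℝ) : cross (-x) y = -cross x y := by
  simp only [cross, Prod.fst_neg, Prod.snd_neg]; ring

lemma cross_neg_right (x y : ℝ × ℝ) : cross x (-y) = -cross x y := by
  simp only [cross, Prod.fst_neg, Prod.snd_neg]; ring

lemma cross_mul_cross (w x y z : ℝ × ℝ) :
    cross w y * cross x z = cross w x * cross y z + cross w z * cross x y := by
  unfold cross; ring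

lemma cross_pos_trans {w x y z : ℝ × ℝ} (hwx : 0 ≤ cross w x) (hwy : 0 < cross w y)
    (hwz : 0 < cross w z) (hxy : 0 < cross x y) (hyz : 0 < cross y z) : 0 < cross x z := by
  refine pos_of_mul_pos_right ?_ hwy.le
  rw [cross_mul_cross]
  positivity

lemma sideVal_swap (p q r : ℝ × ℝ) : sideVal q p r = -sideVal p q r := by
  unfold sideVal; ring

lemma sideVal_left (p q : ℝ × ℝ) : sideVal p q p = 0 := by unfold sideVal; ring

lemma sideVal_right (p q : ℝ × ℝ) : sideVal p q q = 0 := by unfold sideVal; ring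

lemma sideVal_swap_right (p q r : ℝ × ℝ) : sideVal p r q = -sideVal p q r := by
  unfold sideVal; ring

lemma cross_sub_eq_sideVal_sub (a b p q : ℝ × ℝ) :
    cross (b - a) (q - p) = sideVal a b q - sideVal a b p := by
  simp only [cross, sideVal, Prod.fst_sub, Prod.snd_sub]; ring

lemma collinear_of_sideVal_eq_zero {p q r : ℝ × ℝ} (hpq : p ≠ q) (h : sideVal p q r = 0) :
    Collinear ℝ ({p, q, r} : Set (ℝ × ℝ)) := by
  rw [collinear_iff_of_mem (p₀ := p) (by simp)]
  have hnorm : (q.1 - p.1) ^ 2 + (q.2 - p.2) ^ 2 ≠ 0 := fun h0 ↦ hpq <| Prod.ext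
    (by nlinarith [sq_nonneg (q.1 - p.1), sq_nonneg (q.2 - p.2)])
    (by nlinarith [sq_nonneg (q.1 - p.1), sq_nonneg (q.2 - p.2)])
  refine ⟨q - p, ?_⟩
  rintro x (rfl | rfl | rfl)
  · exact ⟨0, by simp⟩
  · exact ⟨1, by simp⟩
  · unfold sideVal at h
    refine ⟨((q.1 - p.1) * (x.1 - p.1) + (q.2 - p.2) * (x.2 - p.2)) /
      ((q.1 - p.1) ^ 2 + (q.2 - p.2) ^ 2), Prod.ext ?_ ?_⟩
    · simp only [vadd_eq_add, Prod.fst_add, Prod.smul_fst, Prod.fst_sub, smul_eq_mul]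
      field_simp
      linear_combination (p.2 - q.2) * h
    · simp only [vadd_eq_add, Prod.snd_add, Prod.smul_snd, Prod.snd_sub, smul_eq_mul]
      field_simp
      linear_combination (q.1 - p.1) * h

lemma exists_enumeration_of_strict_total {ι : Type*} [Nonempty ι] (s : Finset ι)
    (r : ι → ι → Prop) (hirrefl : ∀ x ∈ s, ¬ r x x)
    (htrans : ∀ x ∈ s, ∀ y ∈ s, ∀ z ∈ s, r x y → r y z → r x z)
    (htotal : ∀ x ∈ s, ∀ y ∈ s, x ≠ y → r x y ∨ r y x) :
    ∃ u : ℕ → ι, u '' Set.Iio #s = s ∧ ∀ i j, i < j → j < #s → r (u i) (u j) := by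
  classical
  let R : s → s → Prop := fun x y ↦ r x y
  have : IsStrictTotalOrder s R :=
    { irrefl := fun x ↦ hirrefl x x.2
      trans := fun x y z ↦ htrans x x.2 y y.2 z z.2
      trichotomous := fun x y hxy hyx ↦ by
        by_contra hne
        exact (htotal x x.2 y y.2 (Subtype.coe_ne_coe.mpr hne)).elim hxy hyx }
  let : LinearOrder s := linearOrderOfSTO R
  let e : Fin #s ≃o s := Fintype.orderIsoFinOfCardEq s (Fintype.card_coe s)
  let u : ℕ → ι := Function.extend Fin.val (fun i ↦ (e i : ι)) fun _ ↦ Classical.arbitrary ι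
  have hu (i : Fin #s) : u i = e i := Fin.val_injective.extend_apply _ _ i
  refine ⟨u, Set.ext fun x ↦ ⟨?_, fun hx ↦ ⟨e.symm ⟨x, hx⟩, (e.symm ⟨x, hx⟩).2, ?_⟩⟩, ?_⟩
  · rintro ⟨i, hi, rfl⟩
    exact hu ⟨i, hi⟩ ▸ (e ⟨i, hi⟩).2
  · rw [hu, e.apply_symm_apply]
  · intro i j hij hj
    rw [hu ⟨i, hij.trans hj⟩, hu ⟨j, hj⟩]
    exact e.lt_iff_lt.mpr (Fin.mk_lt_mk.mpr hij)

lemma exists_nat_eq_of_le_add_one {f : ℕ → ℕ} {k m : ℕ} (h0 : f 0 ≤ m) (hk : m ≤ f k)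
    (hstep : ∀ i < k, f (i + 1) ≤ f i + 1) : ∃ i ≤ k, f i = m := by
  induction k with
  | zero => exact ⟨0, le_rfl, h0.antisymm hk⟩
  | succ k ih =>
    rcases le_or_gt m (f k) with hm | hm
    · obtain ⟨i, hi, hfi⟩ := ih hm fun i hi ↦ hstep i (hi.trans k.lt_succ_self)
      exact ⟨i, hi.trans k.le_succ, hfi⟩
    · exact ⟨k + 1, le_rfl, by have := hstep k k.lt_succ_self; omega⟩

lemma periodic_map_fin_add {α : Type*} {N : ℕ} {f : ℕ → α} (hf : Function.Periodic f N)
    (i : Fin N) (s : ℕ) : f ↑(i + ⟨s % N, Nat.mod_lt _ i.pos⟩) = f (i + s) := by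
  rw [Fin.val_add, Nat.add_mod_mod, hf.map_mod_nat]

lemma periodic_image_fin_add {α : Type*} {N : ℕ} {f : ℕ → α} (hf : Function.Periodic f N)
    (i : Fin N) (a b : ℕ) :
    (fun k : Fin N ↦ f k) '' {t | ∃ s, a ≤ s ∧ s ≤ b ∧ t = i + ⟨s % N, Nat.mod_lt _ i.pos⟩} =
      (fun s ↦ f (i + s)) '' Set.Icc a b := by
  ext x
  constructor
  · rintro ⟨_, ⟨s, has, hsb, rfl⟩, rfl⟩
    exact ⟨s, ⟨has, hsb⟩, (periodic_map_fin_add hf i s).symm⟩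
  · rintro ⟨s, ⟨has, hsb⟩, rfl⟩
    exact ⟨_, ⟨s, has, hsb, rfl⟩, periodic_map_fin_add hf i s⟩

section PointSet

variable {P : Finset (ℝ × ℝ)} {n : ℕ}

lemma mem_negSide {u v p : ℝ × ℝ} : p ∈ negSide P u v ↔ p ∈ P ∧ sideVal u v p < 0 :=
  Finset.mem_filter

lemma mem_posSide {u v p : ℝ × ℝ} : p ∈ posSide P u v ↔ p ∈ P ∧ 0 < sideVal u v p :=
  Finset.mem_filter

lemma posSide_swap (u v : ℝ × ℝ) : posSide P v u = negSide P u v := by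
  ext p
  rw [mem_posSide, mem_negSide, sideVal_swap, Left.neg_pos_iff]

lemma negSide_swap (u v : ℝ × ℝ) : negSide P v u = posSide P u v := (posSide_swap v u).symm

lemma GenPos.sideVal_ne_zero (hP : GenPos P) {p q r : ℝ × ℝ} (hp : p ∈ P) (hq : q ∈ P)
    (hr : r ∈ P) (hpq : p ≠ q) (hpr : p ≠ r) (hqr : q ≠ r) : sideVal p q r ≠ 0 :=
  fun h ↦ hP p hp q hq r hr hpq hpr hqr (collinear_of_sideVal_eq_zero hpq h)

lemma GenPos.sideVal_eq_zero_iff (hP : GenPos P) {p q r : ℝ × ℝ} (hp : p ∈ P) (hq : q ∈ P)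
    (hr : r ∈ P) (hpq : p ≠ q) : sideVal p q r = 0 ↔ r = p ∨ r = q := by
  refine ⟨fun h ↦ ?_, ?_⟩
  · by_contra! hne
    exact hP.sideVal_ne_zero hp hq hr hpq hne.1.symm hne.2.symm h
  · rintro (rfl | rfl)
    · exact sideVal_left _ _
    · exact sideVal_right _ _

lemma GenPos.card_negSide_add_card_posSide (hP : GenPos P) {p q : ℝ × ℝ} (hp : p ∈ P)
    (hq : q ∈ P) (hpq : p ≠ q) : #(negSide P p q) + #(posSide P p q) + 2 = #P := by
  have hdisj : Disjoint (negSide P p q) (posSide P p q) :=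
    Finset.disjoint_filter.mpr fun _ _ hneg ↦ hneg.not_gt
  have hsdiff : negSide P p q ∪ posSide P p q = P \ {p, q} := by
    ext r
    simp only [Finset.mem_union, mem_negSide, mem_posSide, ← and_or_left, Finset.mem_sdiff,
      Finset.mem_insert, Finset.mem_singleton]
    exact and_congr_right fun hr ↦
      lt_or_lt_iff_ne.trans (not_congr (hP.sideVal_eq_zero_iff hp hq hr hpq))
  have hpair : ({p, q} : Finset (ℝ × ℝ)) ⊆ P := by simp [Finset.insert_subset_iff, hp, hq]
  rw [← Finset.card_union_of_disjoint hdisj, hsdiff, ← Finset.card_pair hpq,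
    Finset.card_sdiff_add_card_eq_card hpair]

lemma isHalving_iff {p q : ℝ × ℝ} : IsHalving P n p q ↔
    p ∈ P ∧ q ∈ P ∧ p ≠ q ∧ #(negSide P p q) = n - 1 ∧ #(posSide P p q) = n - 1 := by
  refine and_congr_right fun _ ↦ and_congr_right fun _ ↦ and_congr_right fun _ ↦ ?_
  omega

lemma IsHalving.symm {p q : ℝ × ℝ} (h : IsHalving P n p q) : IsHalving P n q p := by
  obtain ⟨hp, hq, hne, hneg, hpos⟩ := isHalving_iff.mp h
  exact isHalving_iff.mpr ⟨hq, hp, hne.symm, by rwa [negSide_swap], by rwa [posSide_swap]⟩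

/-- The points of `P` strictly to the left of the line through `p` directed by `w`. -/
noncomputable def leftHalf (P : Finset (ℝ × ℝ)) (p w : ℝ × ℝ) : Finset (ℝ × ℝ) :=
  {q ∈ P | 0 < cross w (q - p)}

lemma mem_leftHalf {p w q : ℝ × ℝ} : q ∈ leftHalf P p w ↔ q ∈ P ∧ 0 < cross w (q - p) :=
  Finset.mem_filter

lemma ne_of_mem_leftHalf {p w q : ℝ × ℝ} (hq : q ∈ leftHalf P p w) : p ≠ q := by
  rintro rfl
  simpa [cross] using (mem_leftHalf.mp hq).2

lemma GenPos.negSide_subset_insert_negSide (hP : GenPos P) {p w q q' : ℝ × ℝ} (hp : p ∈ P)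
    (hq : q ∈ leftHalf P p w) (hq' : q' ∈ leftHalf P p w) (hqq' : 0 < sideVal p q q')
    (hbetween : ∀ r ∈ leftHalf P p w, 0 < sideVal p q r → ¬ 0 < sideVal p r q') :
    negSide P p q' ⊆ insert q (negSide P p q) := by
  intro r hr
  obtain ⟨hrP, hr⟩ := mem_negSide.mp hr
  rw [Finset.mem_insert, mem_negSide, or_iff_not_imp_left]
  refine fun hrq ↦ ⟨hrP, ?_⟩
  by_contra! hqr
  have hpr : p ≠ r := by rintro rfl; exact hr.ne (sideVal_left _ _)
  have hqr : 0 < sideVal p q r :=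
    hqr.lt_of_ne' (hP.sideVal_ne_zero hp (mem_leftHalf.mp hq).1 hrP
      (ne_of_mem_leftHalf hq) hpr (Ne.symm hrq))
  have hrq_pos : 0 < sideVal p r q' := by rwa [sideVal_swap_right, Left.neg_pos_iff]
  -- `r` lies in the cone at `p` spanned by `q` and `q'`, hence in the same half-plane.
  have hcone : 0 < cross w (r - p) * sideVal p q q' := by
    rw [sideVal_eq_cross, cross_mul_cross]
    exact add_pos (mul_pos (mem_leftHalf.mp hq).2 hrq_pos) (mul_pos (mem_leftHalf.mp hq').2 hqr)
  exact hbetween r (mem_leftHalf.mpr ⟨hrP, pos_of_mul_pos_left hcone hqq'.le⟩) hqr hrq_pos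

/-- The terms `u 0, u 1, …, u (#(leftHalf P p w) - 1)` are the points of `leftHalf P p w`, in
anticlockwise order around `p`; the later terms are arbitrary. -/
structure IsAngularEnumeration (P : Finset (ℝ × ℝ)) (p w : ℝ × ℝ) (u : ℕ → ℝ × ℝ) : Prop where
  image_eq : u '' Set.Iio #(leftHalf P p w) = leftHalf P p w
  sideVal_pos : ∀ i j, i < j → j < #(leftHalf P p w) → 0 < sideVal p (u i) (u j)

lemma GenPos.exists_isAngularEnumeration (hP : GenPos P) {p : ℝ × ℝ} (hp : p ∈ P) (w : ℝ × ℝ) :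
    ∃ u, IsAngularEnumeration P p w u := by
  obtain ⟨u, hu, hpos⟩ := exists_enumeration_of_strict_total (leftHalf P p w)
    (fun q r ↦ 0 < sideVal p q r) (fun q _ ↦ by simp only [sideVal_right, lt_irrefl, not_false_iff])
    (fun x hx y hy z hz ↦ cross_pos_trans (mem_leftHalf.mp hx).2.le
      (mem_leftHalf.mp hy).2 (mem_leftHalf.mp hz).2)
    fun q hq r hr hqr ↦ by
      rw [sideVal_swap_right p q r, Left.neg_pos_iff, or_comm]
      exact lt_or_gt_of_ne (hP.sideVal_ne_zero hp (mem_leftHalf.mp hq).1 (mem_leftHalf.mp hr).1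
        (ne_of_mem_leftHalf hq) (ne_of_mem_leftHalf hr) hqr)
  exact ⟨u, hu, hpos⟩

namespace IsAngularEnumeration

variable {p w : ℝ × ℝ} {u : ℕ → ℝ × ℝ} (hu : IsAngularEnumeration P p w u)
include hu

lemma mem {i : ℕ} (hi : i < #(leftHalf P p w)) : u i ∈ leftHalf P p w :=
  hu.image_eq.subset (Set.mem_image_of_mem u hi)

lemma exists_eq {q : ℝ × ℝ} (hq : q ∈ leftHalf P p w) : ∃ i < #(leftHalf P p w), u i = q :=
  hu.image_eq.superset hq

lemma sideVal_pos_iff {i j : ℕ} (hi : i < #(leftHalf P p w)) (hj : j < #(leftHalf P p w)) :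
    0 < sideVal p (u i) (u j) ↔ i < j := by
  refine ⟨fun h ↦ ?_, fun hij ↦ hu.sideVal_pos i j hij hj⟩
  by_contra! hji
  rcases hji.eq_or_lt with rfl | hji
  · exact h.ne' (sideVal_right _ _)
  · have := hu.sideVal_pos j i hji hi
    rw [sideVal_swap_right] at this
    linarith

lemma card_negSide_zero_lt (hp : p ∈ P) :
    #(negSide P p (u 0)) + #(leftHalf P p w) < #P := by
  have hdisj : Disjoint (negSide P p (u 0)) (leftHalf P p w) := by
    refine Finset.disjoint_left.mpr fun r hneg hleft ↦ ?_
    obtain ⟨j, hj, rfl⟩ := hu.exists_eq hleft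
    have hneg := (mem_negSide.mp hneg).2
    rw [sideVal_swap_right, Left.neg_neg_iff, hu.sideVal_pos_iff hj (by omega)] at hneg
    exact Nat.not_lt_zero _ hneg
  rw [← Finset.card_union_of_disjoint hdisj]
  refine Finset.card_lt_card (Finset.ssubset_iff_of_subset ?_ |>.mpr ⟨p, hp, ?_⟩)
  · exact Finset.union_subset (Finset.filter_subset _ _) (Finset.filter_subset _ _)
  · simp [mem_negSide, mem_leftHalf, sideVal_left, cross]

lemma card_leftHalf_le_card_negSide_last :
    #(leftHalf P p w) - 1 ≤ #(negSide P p (u (#(leftHalf P p w) - 1))) := by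
  refine Finset.pred_card_le_card_erase.trans
    (Finset.card_le_card (s := (leftHalf P p w).erase (u (#(leftHalf P p w) - 1))) ?_)
  intro r hr
  obtain ⟨hne, hr⟩ := Finset.mem_erase.mp hr
  obtain ⟨j, hj, rfl⟩ := hu.exists_eq hr
  have hlast : j < #(leftHalf P p w) - 1 := lt_of_le_of_ne (by omega) fun h ↦ hne (by rw [h])
  rw [mem_negSide, sideVal_swap_right, Left.neg_neg_iff]
  exact ⟨(mem_leftHalf.mp hr).1, hu.sideVal_pos _ _ hlast (by omega)⟩

lemma card_negSide_succ_le (hP : GenPos P) (hp : p ∈ P) {i : ℕ}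
    (hi : i + 1 < #(leftHalf P p w)) :
    #(negSide P p (u (i + 1))) ≤ #(negSide P p (u i)) + 1 := by
  have hi' : i < #(leftHalf P p w) := i.lt_succ_self.trans hi
  refine (Finset.card_le_card (hP.negSide_subset_insert_negSide hp (hu.mem hi') (hu.mem hi)
    (hu.sideVal_pos _ _ i.lt_succ_self hi) fun r hr hir hri ↦ ?_)).trans
    (Finset.card_insert_le _ _)
  obtain ⟨j, hj, rfl⟩ := hu.exists_eq hr
  rw [hu.sideVal_pos_iff hi' hj] at hir
  rw [hu.sideVal_pos_iff hj hi] at hri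
  omega

end IsAngularEnumeration

lemma GenPos.exists_card_negSide_eq (hP : GenPos P) {p : ℝ × ℝ} (hp : p ∈ P) {w : ℝ × ℝ} {m : ℕ}
    (hm : m < #(leftHalf P p w)) (hmP : #P ≤ m + #(leftHalf P p w) + 1) :
    ∃ q ∈ leftHalf P p w, #(negSide P p q) = m := by
  obtain ⟨u, hu⟩ := hP.exists_isAngularEnumeration hp w
  have hfirst := hu.card_negSide_zero_lt hp
  have hlast := hu.card_leftHalf_le_card_negSide_last
  obtain ⟨i, hi, hcard⟩ := exists_nat_eq_of_le_add_one (f := fun i ↦ #(negSide P p (u i)))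
    (k := #(leftHalf P p w) - 1) (m := m) (by omega) (by omega)
    fun i hi ↦ hu.card_negSide_succ_le hP hp (by omega)
  exact ⟨u i, hu.mem (by omega), hcard⟩

lemma GenPos.exists_isHalving_of_le_card_leftHalf (hP : GenPos P) (hcard : #P = 2 * n)
    {p : ℝ × ℝ} (hp : p ∈ P) {w : ℝ × ℝ} (hn : n ≤ #(leftHalf P p w)) :
    ∃ q ∈ leftHalf P p w, IsHalving P n p q := by
  have hpos : 0 < #P := Finset.card_pos.mpr ⟨p, hp⟩
  obtain ⟨q, hq, hneg⟩ := hP.exists_card_negSide_eq hp (m := n - 1) (w := w)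
    (by omega) (by omega)
  have hqP := (mem_leftHalf.mp hq).1
  have hsides := hP.card_negSide_add_card_posSide hp hqP (ne_of_mem_leftHalf hq)
  exact ⟨q, hq, isHalving_iff.mpr ⟨hp, hqP, ne_of_mem_leftHalf hq, hneg, by omega⟩⟩

lemma GenPos.exists_isHalving_sideVal_lt (hP : GenPos P) (hcard : #P = 2 * n)
    {a b p : ℝ × ℝ} (hab : IsHalving P n a b) (hp : p ∈ posSide P a b) :
    ∃ q, IsHalving P n p q ∧ sideVal a b q < sideVal a b p := by
  obtain ⟨hpP, hpos⟩ := mem_posSide.mp hp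
  obtain ⟨ha, -, -, hneg, -⟩ := isHalving_iff.mp hab
  have hleft (q : ℝ × ℝ) : 0 < cross (a - b) (q - p) ↔ sideVal a b q < sideVal a b p := by
    rw [← neg_sub b a, cross_neg_left, cross_sub_eq_sideVal_sub, neg_sub, sub_pos]
  have hsub : insert a (negSide P a b) ⊆ leftHalf P p (a - b) := by
    intro q hq
    rw [mem_leftHalf, hleft]
    rcases Finset.mem_insert.mp hq with rfl | hq
    · exact ⟨ha, by rwa [sideVal_left]⟩
    · exact ⟨(mem_negSide.mp hq).1, (mem_negSide.mp hq).2.trans hpos⟩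
  have hle := Finset.card_le_card hsub
  rw [Finset.card_insert_of_notMem (by simp [mem_negSide, sideVal_left]), hneg] at hle
  obtain ⟨q, hq, hpq⟩ := hP.exists_isHalving_of_le_card_leftHalf hcard hpP
    (w := a - b) (by omega)
  exact ⟨q, hpq, (hleft q).mp (mem_leftHalf.mp hq).2⟩

/-- `σ` maps each point of `P` to the other point of `P` on its halving line, which is unique. -/
structure IsHalvingPartner (P : Finset (ℝ × ℝ)) (n : ℕ) (σ : ℝ × ℝ → ℝ × ℝ) : Prop where
  isHalving : ∀ ⦃p⦄, p ∈ P → IsHalving P n p (σ p)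
  eq_of_isHalving : ∀ ⦃p q⦄, IsHalving P n p q → q = σ p

lemma exists_isHalvingPartner
    (hone : ∀ p ∈ P, Set.ncard {q : ℝ × ℝ | q ∈ P ∧ IsHalving P n p q} = 1) :
    ∃ σ, IsHalvingPartner P n σ := by
  choose! σ hσ using fun p hp ↦ Set.ncard_eq_one.mp (hone p hp)
  exact ⟨σ, fun p hp ↦ ((hσ p hp).superset rfl).2,
    fun p q hpq ↦ (hσ p hpq.1).subset ⟨hpq.2.1, hpq⟩⟩

/-- The vector from `p` to `σ p`; it directs the halving line through `p`. -/
def chord (σ : ℝ × ℝ → ℝ × ℝ) (p : ℝ × ℝ) : ℝ × ℝ := σ p - p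

namespace IsHalvingPartner

variable {σ : ℝ × ℝ → ℝ × ℝ} (hσ : IsHalvingPartner P n σ) {p q : ℝ × ℝ}
include hσ

lemma mem (hp : p ∈ P) : σ p ∈ P := (hσ.isHalving hp).2.1

lemma ne (hp : p ∈ P) : p ≠ σ p := (hσ.isHalving hp).2.2.1

lemma partner_partner (hp : p ∈ P) : σ (σ p) = p :=
  (hσ.eq_of_isHalving (hσ.isHalving hp).symm).symm

lemma injOn : Set.InjOn σ P :=
  Set.LeftInvOn.injOn (f₁' := σ) fun _ hp ↦ hσ.partner_partner hp

lemma chord_partner (hp : p ∈ P) : chord σ (σ p) = -chord σ p := by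
  rw [chord, chord, hσ.partner_partner hp, neg_sub]

lemma cross_chord_partner (hp : p ∈ P) (hq : q ∈ P) :
    cross (chord σ (σ p)) (chord σ (σ q)) = cross (chord σ p) (chord σ q) := by
  rw [hσ.chord_partner hp, hσ.chord_partner hq, cross_neg_left, cross_neg_right, neg_neg]

lemma sideVal_partner_lt (hP : GenPos P) (hcard : #P = 2 * n) {a b : ℝ × ℝ}
    (hab : IsHalving P n a b) (hp : p ∈ P) (hpos : 0 < sideVal a b p) :
    sideVal a b (σ p) < sideVal a b p := by
  obtain ⟨q, hq, hlt⟩ := hP.exists_isHalving_sideVal_lt hcard hab (mem_posSide.mpr ⟨hp, hpos⟩)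
  rwa [← hσ.eq_of_isHalving hq]

lemma sideVal_partner_nonpos (hP : GenPos P) (hcard : #P = 2 * n) {a b : ℝ × ℝ}
    (hab : IsHalving P n a b) (hp : p ∈ P) (hpos : 0 < sideVal a b p) :
    sideVal a b (σ p) ≤ 0 := by
  by_contra! hσpos
  have hlt := hσ.sideVal_partner_lt hP hcard hab hp hpos
  have hgt := hσ.sideVal_partner_lt hP hcard hab (hσ.mem hp) hσpos
  rw [hσ.partner_partner hp] at hgt
  exact hlt.asymm hgt

lemma sideVal_partner_eq_zero_iff (hP : GenPos P) (hp : p ∈ P) (hq : q ∈ P) :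
    sideVal p (σ p) (σ q) = 0 ↔ sideVal p (σ p) q = 0 := by
  rw [hP.sideVal_eq_zero_iff hp (hσ.mem hp) hq (hσ.ne hp),
    hP.sideVal_eq_zero_iff hp (hσ.mem hp) (hσ.mem hq) (hσ.ne hp), hσ.injOn.eq_iff hq hp, or_comm]
  refine or_congr_right ⟨fun h ↦ ?_, fun h ↦ ?_⟩
  · rw [← h, hσ.partner_partner hq]
  · rw [h, hσ.partner_partner hp]

lemma sideVal_partner_neg (hP : GenPos P) (hcard : #P = 2 * n) (hp : p ∈ P) (hq : q ∈ P)
    (hpos : 0 < sideVal p (σ p) q) : sideVal p (σ p) (σ q) < 0 :=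
  (hσ.sideVal_partner_nonpos hP hcard (hσ.isHalving hp) hq hpos).lt_of_ne
    ((hσ.sideVal_partner_eq_zero_iff hP hp hq).not.mpr hpos.ne')

lemma sideVal_partner_pos (hP : GenPos P) (hcard : #P = 2 * n) (hp : p ∈ P) (hq : q ∈ P)
    (hneg : sideVal p (σ p) q < 0) : 0 < sideVal p (σ p) (σ q) := by
  have h := hσ.sideVal_partner_neg hP hcard (hσ.mem hp) hq
  rw [hσ.partner_partner hp, sideVal_swap p, sideVal_swap p, Left.neg_pos_iff,
    Left.neg_neg_iff] at h
  exact h hneg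

lemma sideVal_neg_iff (hP : GenPos P) (hcard : #P = 2 * n) (hp : p ∈ P) (hq : q ∈ P) :
    sideVal p (σ p) q < 0 ↔ 0 < cross (chord σ p) (chord σ q) := by
  rw [chord, chord, cross_sub_eq_sideVal_sub, sub_pos]
  refine ⟨fun hneg ↦ hneg.trans (hσ.sideVal_partner_pos hP hcard hp hq hneg), fun hlt ↦ ?_⟩
  by_contra! hnonneg
  rcases hnonneg.eq_or_lt with hzero | hpos
  · rw [← hzero, (hσ.sideVal_partner_eq_zero_iff hP hp hq).mpr hzero.symm] at hlt
    exact hlt.false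
  · exact (hσ.sideVal_partner_neg hP hcard hp hq hpos).asymm (hpos.trans hlt)

lemma sideVal_pos_iff (hP : GenPos P) (hcard : #P = 2 * n) (hp : p ∈ P) (hq : q ∈ P) :
    0 < sideVal p (σ p) q ↔ cross (chord σ p) (chord σ q) < 0 := by
  have h := hσ.sideVal_neg_iff hP hcard (hσ.mem hp) hq
  rwa [hσ.partner_partner hp, sideVal_swap, Left.neg_neg_iff, hσ.chord_partner hp, cross_neg_left,
    Left.neg_pos_iff] at h

end IsHalvingPartner

/-- One endpoint of each halving line: `a` for the line through `a`, and for every other halving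
line its endpoint on the negative side of the line through `a`. -/
noncomputable def sources (P : Finset (ℝ × ℝ)) (σ : ℝ × ℝ → ℝ × ℝ) (a : ℝ × ℝ) :
    Finset (ℝ × ℝ) :=
  insert a (negSide P a (σ a))

lemma sources_subset {σ : ℝ × ℝ → ℝ × ℝ} {a : ℝ × ℝ} (ha : a ∈ P) : sources P σ a ⊆ P :=
  Finset.insert_subset ha (Finset.filter_subset _ _)

/-- A radial labeling of `P`: the labels `V 0, …, V (2 * n - 1)` exhaust `P`, `V (k + n)` is the
partner of `V k`, and the halving lines turn anticlockwise. The indices are all natural numbers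
so that they need no reduction mod `2 * n`. -/
structure IsRadialLabeling (P : Finset (ℝ × ℝ)) (n : ℕ) (σ : ℝ × ℝ → ℝ × ℝ)
    (V : ℕ → ℝ × ℝ) : Prop where
  mem : ∀ k, V k ∈ P
  exists_eq : ∀ p ∈ P, ∃ k < 2 * n, V k = p
  add_half : ∀ k, V (k + n) = σ (V k)
  cross_pos : ∀ i s, 0 < s → s < n → 0 < cross (chord σ (V i)) (chord σ (V (i + s)))

namespace IsHalvingPartner

variable {σ : ℝ × ℝ → ℝ × ℝ} (hσ : IsHalvingPartner P n σ) {a p q : ℝ × ℝ}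
include hσ

lemma card_sources (hcard : #P = 2 * n) (ha : a ∈ P) : #(sources P σ a) = n := by
  have hpos : 0 < #P := Finset.card_pos.mpr ⟨a, ha⟩
  rw [sources, Finset.card_insert_of_notMem (by simp [mem_negSide, sideVal_left]),
    (isHalving_iff.mp (hσ.isHalving ha)).2.2.2.1]
  omega

lemma mem_sources_or_partner_mem_sources (hP : GenPos P) (hcard : #P = 2 * n) (ha : a ∈ P)
    (hp : p ∈ P) : p ∈ sources P σ a ∨ σ p ∈ sources P σ a := by
  simp only [sources, Finset.mem_insert, mem_negSide]
  rcases lt_trichotomy (sideVal a (σ a) p) 0 with hneg | hzero | hpos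
  · exact Or.inl (Or.inr ⟨hp, hneg⟩)
  · rcases (hP.sideVal_eq_zero_iff ha (hσ.mem ha) hp (hσ.ne ha)).mp hzero with rfl | rfl
    · exact Or.inl (Or.inl rfl)
    · exact Or.inr (Or.inl (hσ.partner_partner ha))
  · exact Or.inr (Or.inr ⟨hσ.mem hp, hσ.sideVal_partner_neg hP hcard ha hp hpos⟩)

lemma partner_notMem_sources (hP : GenPos P) (hcard : #P = 2 * n) (ha : a ∈ P)
    (hp : p ∈ sources P σ a) : σ p ∉ sources P σ a := by
  have hpP := sources_subset ha hp
  simp only [sources, Finset.mem_insert, mem_negSide] at hp ⊢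
  rintro (hσp | ⟨-, hσp⟩)
  · rcases hp with rfl | ⟨-, hp⟩
    · exact hσ.ne hpP hσp.symm
    · rw [← hσp, hσ.partner_partner hpP, sideVal_right] at hp
      exact hp.false
  · rcases hp with rfl | ⟨-, hp⟩
    · exact hσp.ne (sideVal_right _ _)
    · exact hσp.asymm (hσ.sideVal_partner_pos hP hcard ha hpP hp)

lemma cross_chord_pos_of_mem_negSide (hP : GenPos P) (hcard : #P = 2 * n) (ha : a ∈ P)
    (hp : p ∈ negSide P a (σ a)) : 0 < cross (chord σ a) (chord σ p) :=
  (hσ.sideVal_neg_iff hP hcard ha (mem_negSide.mp hp).1).mp (mem_negSide.mp hp).2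

lemma cross_chord_nonneg_of_mem_sources (hP : GenPos P) (hcard : #P = 2 * n) (ha : a ∈ P)
    (hp : p ∈ sources P σ a) : 0 ≤ cross (chord σ a) (chord σ p) := by
  rcases Finset.mem_insert.mp hp with rfl | hp
  · exact (cross_self _).ge
  · exact (hσ.cross_chord_pos_of_mem_negSide hP hcard ha hp).le

lemma cross_chord_pos_of_mem_sources (hP : GenPos P) (hcard : #P = 2 * n) (ha : a ∈ P)
    (hp : p ∈ sources P σ a) (hq : q ∈ sources P σ a)
    (hpq : 0 < cross (chord σ p) (chord σ q)) : 0 < cross (chord σ a) (chord σ q) := by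
  rcases Finset.mem_insert.mp hq with rfl | hq
  · rw [cross_swap, Left.neg_pos_iff] at hpq
    exact absurd hpq (hσ.cross_chord_nonneg_of_mem_sources hP hcard ha hp).not_gt
  · exact hσ.cross_chord_pos_of_mem_negSide hP hcard ha hq

lemma cross_chord_pos_or_pos (hP : GenPos P) (hcard : #P = 2 * n) (ha : a ∈ P)
    (hp : p ∈ sources P σ a) (hq : q ∈ sources P σ a) (hpq : p ≠ q) :
    0 < cross (chord σ p) (chord σ q) ∨ 0 < cross (chord σ q) (chord σ p) := by
  have hpP := sources_subset ha hp
  have hqP := sources_subset ha hq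
  have hqσ : q ≠ σ p := fun h ↦ hσ.partner_notMem_sources hP hcard ha hp (h ▸ hq)
  rw [cross_swap (chord σ p), Left.neg_pos_iff, ← hσ.sideVal_neg_iff hP hcard hpP hqP,
    ← hσ.sideVal_pos_iff hP hcard hpP hqP]
  exact lt_or_gt_of_ne
    (hP.sideVal_ne_zero hpP (hσ.mem hpP) hqP (hσ.ne hpP) hpq hqσ.symm)

lemma exists_sources_enumeration (hP : GenPos P) (hcard : #P = 2 * n) (ha : a ∈ P) :
    ∃ u : ℕ → ℝ × ℝ, u '' Set.Iio n = sources P σ a ∧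
      ∀ i j, i < j → j < n → 0 < cross (chord σ (u i)) (chord σ (u j)) := by
  have h := exists_enumeration_of_strict_total (sources P σ a)
    (fun p q ↦ 0 < cross (chord σ p) (chord σ q)) (fun p _ ↦ (cross_self _).not_gt)
    (fun p hp q hq r hr hpq hqr ↦
      cross_pos_trans (hσ.cross_chord_nonneg_of_mem_sources hP hcard ha hp)
        (hσ.cross_chord_pos_of_mem_sources hP hcard ha hp hq hpq)
        (hσ.cross_chord_pos_of_mem_sources hP hcard ha hq hr hqr) hpq hqr)
    fun p hp q hq ↦ hσ.cross_chord_pos_or_pos hP hcard ha hp hq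
  rwa [hσ.card_sources hcard ha] at h

lemma exists_isRadialLabeling (hP : GenPos P) (hcard : #P = 2 * n) (hn : 0 < n) :
    ∃ V, IsRadialLabeling P n σ V := by
  obtain ⟨a, ha⟩ : P.Nonempty := Finset.card_pos.mp (by omega)
  obtain ⟨u, hu, hpos⟩ := hσ.exists_sources_enumeration hP hcard ha
  let V : ℕ → ℝ × ℝ := fun k ↦ σ^[k / n] (u (k % n))
  have hVu {k : ℕ} (hk : k < n) : V k = u k := by
    simp only [V, Nat.div_eq_of_lt hk, Nat.mod_eq_of_lt hk, Function.iterate_zero_apply]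
  have hVadd (k : ℕ) : V (k + n) = σ (V k) := by
    simp only [V, Nat.add_div_right k hn, Nat.add_mod_right, Function.iterate_succ_apply']
  have hV (k : ℕ) : V k ∈ P := by
    refine (Set.MapsTo.iterate (fun _ hp ↦ hσ.mem hp : Set.MapsTo σ P P) (k / n)) ?_
    exact sources_subset ha (hu.subset (Set.mem_image_of_mem u (Nat.mod_lt k hn)))
  refine ⟨V, hV, fun p hp ↦ ?_, hVadd, fun i s hs hsn ↦ ?_⟩
  · rcases hσ.mem_sources_or_partner_mem_sources hP hcard ha hp with hp' | hp'
    · obtain ⟨k, hk, rfl⟩ := hu.superset hp'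
      exact ⟨k, by simp only [Set.mem_Iio] at hk; omega, hVu hk⟩
    · obtain ⟨k, hk, hku⟩ := hu.superset hp'
      refine ⟨k + n, by simp only [Set.mem_Iio] at hk; omega, ?_⟩
      rw [hVadd, hVu hk, hku, hσ.partner_partner hp]
  · have hperiodic :
        Function.Periodic (fun i ↦ 0 < cross (chord σ (V i)) (chord σ (V (i + s)))) n := by
      intro i
      simp only [add_right_comm i n s, hVadd, hσ.cross_chord_partner (hV i) (hV (i + s))]
    rw [← hperiodic.map_mod_nat i]
    have hi := Nat.mod_lt i hn
    rcases lt_or_ge (i % n + s) n with his | his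
    · rw [hVu hi, hVu his]
      exact hpos _ _ (by omega) his
    · rw [← Nat.sub_add_cancel his, hVadd, hσ.chord_partner (hV _), cross_neg_right, ← cross_swap,
        hVu hi, hVu (by omega)]
      exact hpos _ _ (by omega) hi

end IsHalvingPartner

namespace IsRadialLabeling

variable {σ : ℝ × ℝ → ℝ × ℝ} {V : ℕ → ℝ × ℝ} (hV : IsRadialLabeling P n σ V)
include hV

lemma injOn (hcard : #P = 2 * n) : Set.InjOn V (Set.Iio (2 * n)) := by
  have hinj := Finset.injOn_of_surjOn_of_card_le (s := Finset.range (2 * n)) V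
    (fun k _ ↦ hV.mem k)
    (fun p hp ↦ by simpa using hV.exists_eq p hp) (by simp [hcard])
  rwa [Finset.coe_range] at hinj

lemma isHalving (hσ : IsHalvingPartner P n σ) (k : ℕ) : IsHalving P n (V k) (V (k + n)) :=
  hV.add_half k ▸ hσ.isHalving (hV.mem k)

lemma periodic (hσ : IsHalvingPartner P n σ) : Function.Periodic V (2 * n) := fun k ↦ by
  rw [two_mul, ← add_assoc, hV.add_half, hV.add_half, hσ.partner_partner (hV.mem k)]

lemma halvingCount_eq (hσ : IsHalvingPartner P n σ) (hcard : #P = 2 * n) :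
    halvingCount P n = n := by
  have hlines : {e : Sym2 (ℝ × ℝ) | ∃ u v, e = s(u, v) ∧ IsHalving P n u v} =
      (fun k ↦ s(V k, V (k + n))) '' Set.Iio n := by
    ext e
    constructor
    · rintro ⟨p, q, rfl, hpq⟩
      obtain rfl := hσ.eq_of_isHalving hpq
      obtain ⟨k, hk, rfl⟩ := hV.exists_eq p hpq.1
      rcases lt_or_ge k n with hkn | hkn
      · exact ⟨k, hkn, by simp only [hV.add_half]⟩
      · obtain ⟨k, rfl⟩ := Nat.exists_eq_add_of_le' hkn
        refine ⟨k, by simp only [Set.mem_Iio]; omega, ?_⟩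
        simp only [hV.add_half, hσ.partner_partner (hV.mem k), Sym2.eq_swap]
    · rintro ⟨k, -, rfl⟩
      exact ⟨_, _, rfl, hV.isHalving hσ k⟩
  have hinj : Set.InjOn (fun k ↦ s(V k, V (k + n))) (Set.Iio n) := by
    intro i hi j hj hij
    simp only [Set.mem_Iio] at hi hj
    have hV_inj {k l : ℕ} (hk : k < 2 * n) (hl : l < 2 * n) (h : V k = V l) : k = l :=
      hV.injOn hcard hk hl h
    rcases Sym2.eq_iff.mp hij with ⟨h, -⟩ | ⟨h, -⟩
    · exact hV_inj (by omega) (by omega) h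
    · have := hV_inj (by omega) (by omega) h
      omega
  rw [halvingCount, hlines, hinj.ncard_image, ← Finset.coe_range, Set.ncard_coe_finset,
    Finset.card_range]

lemma exists_eq_add (hσ : IsHalvingPartner P n σ) {p : ℝ × ℝ} (hp : p ∈ P) (i : ℕ) :
    ∃ s < 2 * n, V (i + s) = p := by
  obtain ⟨k, hk, rfl⟩ := hV.exists_eq p hp
  have hi : i % (2 * n) < 2 * n := Nat.mod_lt i (by omega)
  refine ⟨(k + (2 * n - i % (2 * n))) % (2 * n), Nat.mod_lt _ (by omega), ?_⟩
  have hmod : i + (k + (2 * n - i % (2 * n))) ≡ k [MOD 2 * n] := by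
    have h := ((Nat.mod_modEq i (2 * n)).symm.add_right (k + (2 * n - i % (2 * n))))
    rwa [show i % (2 * n) + (k + (2 * n - i % (2 * n))) = k + 2 * n by omega, Nat.ModEq,
      Nat.add_mod_right] at h
  rw [← (hV.periodic hσ).map_mod_nat, Nat.add_mod_mod, hmod, Nat.mod_eq_of_lt hk]

lemma sideVal_neg (hσ : IsHalvingPartner P n σ) (hP : GenPos P) (hcard : #P = 2 * n) {i s : ℕ}
    (hs : 0 < s) (hsn : s < n) : sideVal (V i) (V (i + n)) (V (i + s)) < 0 := by
  rw [hV.add_half, hσ.sideVal_neg_iff hP hcard (hV.mem _) (hV.mem _)]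
  exact hV.cross_pos i s hs hsn

lemma sideVal_pos (hσ : IsHalvingPartner P n σ) (hP : GenPos P) (hcard : #P = 2 * n) {i s : ℕ}
    (hs : n < s) (hsn : s < 2 * n) : 0 < sideVal (V i) (V (i + n)) (V (i + s)) := by
  have h := hV.sideVal_neg hσ hP hcard (i := i + n) (s := s - n) (by omega) (by omega)
  rwa [add_assoc, ← two_mul, hV.periodic hσ, sideVal_swap, Left.neg_neg_iff, add_assoc,
    Nat.add_sub_cancel' hs.le] at h

lemma sideVal_neg_iff (hσ : IsHalvingPartner P n σ) (hP : GenPos P) (hcard : #P = 2 * n)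
    {i s : ℕ} (hs : s < 2 * n) :
    sideVal (V i) (V (i + n)) (V (i + s)) < 0 ↔ s ∈ Set.Icc 1 (n - 1) := by
  rw [Set.mem_Icc]
  refine ⟨fun h ↦ ?_, fun h ↦ hV.sideVal_neg hσ hP hcard (by omega) (by omega)⟩
  have h0 : s ≠ 0 := by rintro rfl; exact h.ne (sideVal_left _ _)
  have hn : s ≠ n := by rintro rfl; exact h.ne (sideVal_right _ _)
  by_contra hs'
  exact h.asymm (hV.sideVal_pos hσ hP hcard (by omega) hs)

lemma sideVal_pos_iff (hσ : IsHalvingPartner P n σ) (hP : GenPos P) (hcard : #P = 2 * n)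
    {i s : ℕ} (hs : s < 2 * n) :
    0 < sideVal (V i) (V (i + n)) (V (i + s)) ↔ s ∈ Set.Icc (n + 1) (2 * n - 1) := by
  rw [Set.mem_Icc]
  refine ⟨fun h ↦ ?_, fun h ↦ hV.sideVal_pos hσ hP hcard (by omega) (by omega)⟩
  have h0 : s ≠ 0 := by rintro rfl; exact h.ne' (sideVal_left _ _)
  have hn : s ≠ n := by rintro rfl; exact h.ne' (sideVal_right _ _)
  by_contra hs'
  exact h.asymm (hV.sideVal_neg hσ hP hcard (by omega) (by omega))

lemma coe_negSide_eq (hσ : IsHalvingPartner P n σ) (hP : GenPos P) (hcard : #P = 2 * n) (i : ℕ) :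
    (negSide P (V i) (V (i + n)) : Set (ℝ × ℝ)) = (fun s ↦ V (i + s)) '' Set.Icc 1 (n - 1) := by
  ext p
  rw [Finset.mem_coe, mem_negSide]
  constructor
  · rintro ⟨hp, hneg⟩
    obtain ⟨s, hs, rfl⟩ := hV.exists_eq_add hσ hp i
    exact ⟨s, (hV.sideVal_neg_iff hσ hP hcard hs).mp hneg, rfl⟩
  · rintro ⟨s, hs, rfl⟩
    have hs2n : s < 2 * n := by rw [Set.mem_Icc] at hs; omega
    exact ⟨hV.mem _, (hV.sideVal_neg_iff hσ hP hcard hs2n).mpr hs⟩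

lemma coe_posSide_eq (hσ : IsHalvingPartner P n σ) (hP : GenPos P) (hcard : #P = 2 * n) (i : ℕ) :
    (posSide P (V i) (V (i + n)) : Set (ℝ × ℝ)) =
      (fun s ↦ V (i + s)) '' Set.Icc (n + 1) (2 * n - 1) := by
  ext p
  rw [Finset.mem_coe, mem_posSide]
  constructor
  · rintro ⟨hp, hpos⟩
    obtain ⟨s, hs, rfl⟩ := hV.exists_eq_add hσ hp i
    exact ⟨s, (hV.sideVal_pos_iff hσ hP hcard hs).mp hpos, rfl⟩
  · rintro ⟨s, hs, rfl⟩
    have hs2n : s < 2 * n := by rw [Set.mem_Icc] at hs; omega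
    exact ⟨hV.mem _, (hV.sideVal_pos_iff hσ hP hcard hs2n).mpr hs⟩

lemma isHLabeling (hσ : IsHalvingPartner P n σ) (hcard : #P = 2 * n) :
    IsHLabeling P n fun k ↦ V k := by
  refine ⟨fun k l hkl ↦ Fin.ext (hV.injOn hcard k.2 l.2 hkl), Set.ext fun p ↦ ⟨?_, fun hp ↦ ?_⟩,
    fun i ↦ ?_⟩
  · rintro ⟨k, rfl⟩
    exact hV.mem k
  · obtain ⟨k, hk, rfl⟩ := hV.exists_eq p hp
    exact ⟨⟨k, hk⟩, rfl⟩
  · simpa only [periodic_map_fin_add (hV.periodic hσ)] using hV.isHalving hσ i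

end IsRadialLabeling

end PointSet

end Halving

open Halving in
/-- A `2n`-point set in general position in which every point lies on exactly one halving
line has exactly `n` halving lines and admits an `h`-labeling `v_0, …, v_{2n-1}` such
that the halving line through `v_i` and `v_{i+n}` splits the remaining points into
`{v_{i+1}, …, v_{i+n-1}}` and `{v_{i+n+1}, …, v_{i+2n-1}}`. -/
theorem stmt12 (P : Finset (ℝ × ℝ)) (n : ℕ) (hn : 2 ≤ n)
    (hgp : GenPos P) (hcard : P.card = 2*n)
    (hone : ∀ p ∈ P, Set.ncard {q : ℝ × ℝ | q ∈ P ∧ IsHalving P n p q} = 1) :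
    halvingCount P n = n ∧
    ∃ v : Fin (2*n) → ℝ × ℝ, IsHLabeling P n v ∧
      ∀ i : Fin (2*n),
        ((↑(negSide P (v i) (v (i + ⟨n % (2*n), Nat.mod_lt _ (by omega)⟩))) : Set (ℝ × ℝ)) =
            v '' {t | ∃ s : ℕ, 1 ≤ s ∧ s ≤ n - 1 ∧ t = i + ⟨s % (2*n), Nat.mod_lt _ (by omega)⟩} ∧
          (↑(posSide P (v i) (v (i + ⟨n % (2*n), Nat.mod_lt _ (by omega)⟩))) : Set (ℝ × ℝ)) =
            v '' {t | ∃ s : ℕ, n + 1 ≤ s ∧ s ≤ 2*n - 1 ∧ t = i + ⟨s % (2*n), Nat.mod_lt _ (by omega)⟩}) ∨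
        ((↑(negSide P (v i) (v (i + ⟨n % (2*n), Nat.mod_lt _ (by omega)⟩))) : Set (ℝ × ℝ)) =
            v '' {t | ∃ s : ℕ, n + 1 ≤ s ∧ s ≤ 2*n - 1 ∧ t = i + ⟨s % (2*n), Nat.mod_lt _ (by omega)⟩} ∧
          (↑(posSide P (v i) (v (i + ⟨n % (2*n), Nat.mod_lt _ (by omega)⟩))) : Set (ℝ × ℝ)) =
            v '' {t | ∃ s : ℕ, 1 ≤ s ∧ s ≤ n - 1 ∧ t = i + ⟨s % (2*n), Nat.mod_lt _ (by omega)⟩}) := by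
  obtain ⟨σ, hσ⟩ := exists_isHalvingPartner hone
  obtain ⟨V, hV⟩ := hσ.exists_isRadialLabeling hgp hcard (by omega)
  refine ⟨hV.halvingCount_eq hσ hcard, fun k ↦ V k, hV.isHLabeling hσ hcard, fun i ↦ Or.inl ?_⟩
  simp only [periodic_map_fin_add (hV.periodic hσ), periodic_image_fin_add (hV.periodic hσ)]
  exact ⟨hV.coe_negSide_eq hσ hgp hcard i, hV.coe_posSide_eq hσ hgp hcard i⟩
end
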